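/- Let φ : 𝔻² → 𝔻² be holomorphic and C²-smooth on the closed bidisc. Then the composition operator C_φ is bounded on the Hardy space H²(𝔻²) if and only if for every ζ ∈ 𝕋² with φ(ζ) ∈ 𝕋², the complex derivative d_ζφ (the 2×2 complex Jacobian matrix at ζ) is invertible. -/

import Mathlib

open MeasureTheory Metric Set ENNReal

noncomputable section

/-- The open unit polydisc in `ℂⁿ`. -/
def polydisc (n : ℕ) : Set (Fin n → ℂ) := {z | ∀ j, ‖z j‖ < 1}

/-- The closed unit polydisc in `ℂⁿ`. -/
def closedPolydisc (n : ℕ) : Set (Fin n → ℂ) := {z | ∀ j, ‖z j‖ ≤ 1}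

/-- The distinguished boundary (torus) of the polydisc. -/
def torus (n : ℕ) : Set (Fin n → ℂ) := {z | ∀ j, ‖z j‖ = 1}

/-- The `(i,j)` entry `∂Φ_i/∂z_j(ζ)` of the complex Jacobian matrix of `Φ` at `ζ`
(computed via the derivative of the extension to the closed polydisc). -/
def jacEntry (n : ℕ) (Φ : (Fin n → ℂ) → (Fin n → ℂ)) (ζ : Fin n → ℂ) (i j : Fin n) : ℂ :=
  fderivWithin ℝ Φ (closedPolydisc n) ζ (Pi.single j 1) i

/-- The square of the Hardy space norm, `sup_{0<r<1} ∫_{𝕋ⁿ} |g(rξ)|² dσ(ξ)`. -/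
def hardySq (n : ℕ) (g : (Fin n → ℂ) → ℂ) : ℝ≥0∞ :=
  ⨆ r ∈ Set.Ioo (0:ℝ) 1,
    ∫⁻ θ in Set.univ.pi (fun _ : Fin n => Set.Icc (0:ℝ) 1),
      ENNReal.ofReal
        (‖g (fun j => (r : ℂ) * Complex.exp (2 * Real.pi * Complex.I * (θ j : ℂ)))‖ ^ 2)

/-- The composition operator `C_Φ` is bounded on the Hardy space `H²(𝔻ⁿ)`. -/
def bddHardy (n : ℕ) (Φ : (Fin n → ℂ) → (Fin n → ℂ)) : Prop :=
  ∃ C > (0:ℝ), ∀ f : (Fin n → ℂ) → ℂ, DifferentiableOn ℂ f (polydisc n) →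
    hardySq n (fun z => f (Φ z)) ≤ ENNReal.ofReal C * hardySq n f

/-!
*Necessity.* Testing boundedness on Szegő kernels gives a Carleson condition: the part of the torus
that `φ` maps into a box of side `t` centred at a torus point has measure `O(tⁿ)`. At a contact
point, that is, a torus point with image on the torus, every `|φ i|` is maximal, so the forms
`conj (φ i) * dφ i` are purely imaginary along the torus; hence a singular Jacobian kills a
real tangent vector `v`. Then a tube of length `ε` in the direction `v` and width `ε²`, whose volume
is of order `ε²ⁿ⁻¹`, is mapped into a box of side `O(ε²)`, against the Carleson condition.

*Sufficiency.* By Schur's test it is enough to bound the integral over the torus of the Poisson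
kernel with pole `φ`, uniformly in its second variable `η`, and this is a local question. At a
point which is not a contact point all Poisson factors but one are bounded (for `n = 2`), and the
remaining one is harmonic. Near a contact point with value `η₀` the functions
`Im (conj (η₀ i) * φ i)` are local coordinates, in which the Poisson factors become Cauchy kernels
of widths `1 - |φ i|²`. These widths vary slowly, being nonnegative `C²` functions, and
freezing the width in the coordinate of largest deviation from `η` lets the variables be
integrated out one after another.
-/

open Filter Topology
open scoped FourierTransform ComplexConjugate Pointwise

section Circle

lemma continuous_coe_fourierChar : Continuous fun t : ℝ => (𝐞 t : ℂ) :=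
  continuous_subtype_val.comp Real.continuous_fourierChar

lemma measurable_coe_fourierChar : Measurable fun t : ℝ => (𝐞 t : ℂ) :=
  continuous_coe_fourierChar.measurable

lemma exists_fourierChar_eq {z : ℂ} (hz : ‖z‖ = 1) : ∃ t : ℝ, (𝐞 t : ℂ) = z := by
  refine ⟨z.arg / (2 * Real.pi), ?_⟩
  rw [Real.fourierChar_apply, mul_div_cancel₀ _ Real.two_pi_pos.ne']
  simpa [hz] using Complex.norm_mul_exp_arg_mul_I z

lemma circleAverage_eq_integral_fourierChar {E : Type*} [NormedAddCommGroup E] [NormedSpace ℝ E]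
    (f : ℂ → E) : Real.circleAverage f 0 1 = ∫ t in Icc (0 : ℝ) 1, f (𝐞 t) := by
  have hrescale := intervalIntegral.integral_comp_mul_left (a := 0) (b := 1)
    (fun θ : ℝ => f (circleMap 0 1 θ)) Real.two_pi_pos.ne'
  rw [mul_zero, mul_one] at hrescale
  rw [Real.circleAverage_def, ← hrescale, intervalIntegral.integral_of_le zero_le_one,
    ← integral_Icc_eq_integral_Ioc]
  simp only [circleMap_zero, Complex.ofReal_one, one_mul, Real.fourierChar_apply]

variable {u : ℂ → ℂ}

lemma continuous_comp_fourierChar (hu : DiffContOnCl ℂ u (ball 0 1)) :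
    Continuous fun t : ℝ => u (𝐞 t) :=
  hu.continuousOn_ball.comp_continuous continuous_coe_fourierChar fun t => by
    rw [mem_closedBall_zero_iff, Circle.norm_coe]

lemma lintegral_re_fourierChar (hu : DiffContOnCl ℂ u (ball 0 1))
    (hpos : ∀ z, ‖z‖ = 1 → 0 ≤ (u z).re) :
    ∫⁻ t in Icc (0 : ℝ) 1, ENNReal.ofReal (u (𝐞 t)).re = ENNReal.ofReal (u 0).re := by
  have hcont := continuous_comp_fourierChar hu
  have hmean : ∫ t in Icc (0 : ℝ) 1, u (𝐞 t) = u 0 := by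
    rw [← circleAverage_eq_integral_fourierChar]
    exact (show DiffContOnCl ℂ u (ball 0 |1|) by rwa [abs_one]).circleAverage
  have hint : IntegrableOn (fun t : ℝ => u (𝐞 t)) (Icc 0 1) :=
    hcont.continuousOn.integrableOn_Icc
  rw [← hmean]
  exact (ofReal_integral_eq_lintegral_ofReal hint.re
    (ae_of_all _ fun t => hpos _ (Circle.norm_coe _))).symm.trans
      (congrArg ENNReal.ofReal (integral_re hint))

lemma poissonKernel_zero_eq_re (w η : ℂ) : poissonKernel 0 w η = ((η + w) / (η - w)).re := by
  rw [poissonKernel_eq_re_herglotzRieszKernel]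
  simp [herglotzRieszKernel_def]

lemma poissonKernel_zero_nonneg {w η : ℂ} (hw : ‖w‖ ≤ 1) (hη : ‖η‖ = 1) :
    0 ≤ poissonKernel 0 w η := by
  rw [poissonKernel_def, sub_zero, sub_zero, hη]
  have : ‖w‖ ^ 2 ≤ 1 ^ 2 := by gcongr
  exact div_nonneg (by linarith) (sq_nonneg _)

lemma poissonKernel_zero_le {w η : ℂ} (hw : ‖w‖ < 1) (hη : ‖η‖ = 1) :
    poissonKernel 0 w η ≤ 2 / (1 - ‖w‖) := by
  have hbound := re_herglotzRieszKernel_le (c := 0) (w := w) (z := η) (R := 1)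
    (by simpa using hη) (by simpa using hw)
  rw [poissonKernel_eq_re_herglotzRieszKernel, Function.comp_apply]
  refine hbound.trans ?_
  rw [sub_zero]
  have : 0 < 1 - ‖w‖ := by linarith
  gcongr
  linarith

lemma measurable_poissonKernel_zero {α : Type*} [MeasurableSpace α] {f g : α → ℂ}
    (hf : Measurable f) (hg : Measurable g) :
    Measurable fun a => poissonKernel 0 (f a) (g a) := by
  simp only [poissonKernel_def, sub_zero]
  fun_prop

lemma enorm_sq_le_lintegral_poissonKernel (hu : DiffContOnCl ℂ u (ball 0 1)) {w : ℂ}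
    (hw : ‖w‖ < 1) :
    ‖u w‖ₑ ^ 2 ≤ ∫⁻ t in Icc (0 : ℝ) 1,
      ENNReal.ofReal (poissonKernel 0 w (𝐞 t)) * ‖u (𝐞 t)‖ₑ ^ 2 := by
  have hu2 : DiffContOnCl ℂ (fun z => u z ^ 2) (ball 0 1) := by
    simpa only [pow_two, smul_eq_mul] using hu.smul hu
  have hformula : ∫ t in Icc (0 : ℝ) 1, poissonKernel 0 w (𝐞 t) • u (𝐞 t) ^ 2 = u w ^ 2 := by
    rw [← circleAverage_eq_integral_fourierChar fun z => poissonKernel 0 w z • u z ^ 2]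
    exact hu2.circleAverage_poissonKernel_smul (by simpa using hw)
  calc ‖u w‖ₑ ^ 2 = ‖∫ t in Icc (0 : ℝ) 1, poissonKernel 0 w (𝐞 t) • u (𝐞 t) ^ 2‖ₑ := by
        rw [hformula, enorm_pow]
    _ ≤ ∫⁻ t in Icc (0 : ℝ) 1, ‖poissonKernel 0 w (𝐞 t) • u (𝐞 t) ^ 2‖ₑ :=
        enorm_integral_le_lintegral_enorm _
    _ = _ := by
        refine lintegral_congr fun t => ?_
        rw [enorm_smul, enorm_pow,
          Real.enorm_of_nonneg (poissonKernel_zero_nonneg hw.le (Circle.norm_coe _))]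

lemma diffContOnCl_herglotz {v : ℂ → ℂ} (hv : DiffContOnCl ℂ v (ball 0 1))
    (hlt : ∀ z, ‖z‖ ≤ 1 → ‖v z‖ < 1) {η : ℂ} (hη : ‖η‖ = 1) :
    DiffContOnCl ℂ (fun z => (η + v z) / (η - v z)) (ball 0 1) := by
  simp only [div_eq_mul_inv, ← smul_eq_mul]
  refine (hv.const_add η).smul ((hv.const_sub η).inv fun z hz h => ?_)
  rw [closure_ball _ one_ne_zero, mem_closedBall_zero_iff] at hz
  exact (hlt z hz).ne (by rw [← sub_eq_zero.1 h, hη])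

lemma lintegral_poissonKernel_comp {v : ℂ → ℂ} (hv : DiffContOnCl ℂ v (ball 0 1))
    (hlt : ∀ z, ‖z‖ ≤ 1 → ‖v z‖ < 1) {η : ℂ} (hη : ‖η‖ = 1) :
    ∫⁻ t in Icc (0 : ℝ) 1, ENNReal.ofReal (poissonKernel 0 (v (𝐞 t)) η) =
      ENNReal.ofReal (poissonKernel 0 (v 0) η) := by
  simp only [poissonKernel_zero_eq_re]
  refine lintegral_re_fourierChar (diffContOnCl_herglotz hv hlt hη) fun z hz => ?_
  rw [← poissonKernel_zero_eq_re]
  exact poissonKernel_zero_nonneg (hlt z hz.le).le hη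

lemma lintegral_enorm_sq_dilate_le (hu : DiffContOnCl ℂ u (ball 0 1)) {r : ℝ} (h0 : 0 ≤ r)
    (h1 : r < 1) :
    ∫⁻ t in Icc (0 : ℝ) 1, ‖u (r * 𝐞 t)‖ₑ ^ 2 ≤ ∫⁻ t in Icc (0 : ℝ) 1, ‖u (𝐞 t)‖ₑ ^ 2 := by
  have hnorm : ∀ z : ℂ, ‖z‖ ≤ 1 → ‖(r : ℂ) * z‖ < 1 := fun z hz => by
    rw [norm_mul, Complex.norm_real, Real.norm_of_nonneg h0]
    exact (mul_le_of_le_one_right h0 hz).trans_lt h1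
  have hcont := continuous_comp_fourierChar hu
  have hmeas : Measurable fun p : ℝ × ℝ =>
      ENNReal.ofReal (poissonKernel 0 (r * 𝐞 p.1) (𝐞 p.2)) * ‖u (𝐞 p.2)‖ₑ ^ 2 :=
    (measurable_poissonKernel_zero
      ((measurable_coe_fourierChar.comp measurable_fst).const_mul _)
      (measurable_coe_fourierChar.comp measurable_snd)).ennreal_ofReal.mul
      ((hcont.measurable.comp measurable_snd).enorm.pow_const 2)
  have hdil : DiffContOnCl ℂ (fun z : ℂ => (r : ℂ) * z) (ball 0 1) :=
    (differentiable_id.const_mul _).diffContOnCl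
  calc ∫⁻ t in Icc (0 : ℝ) 1, ‖u (r * 𝐞 t)‖ₑ ^ 2
    _ ≤ ∫⁻ t in Icc (0 : ℝ) 1, ∫⁻ s in Icc (0 : ℝ) 1,
          ENNReal.ofReal (poissonKernel 0 (r * 𝐞 t) (𝐞 s)) * ‖u (𝐞 s)‖ₑ ^ 2 :=
        lintegral_mono fun t =>
          enorm_sq_le_lintegral_poissonKernel hu (hnorm _ (Circle.norm_coe _).le)
    _ = ∫⁻ s in Icc (0 : ℝ) 1, (∫⁻ t in Icc (0 : ℝ) 1,
          ENNReal.ofReal (poissonKernel 0 (r * 𝐞 t) (𝐞 s))) * ‖u (𝐞 s)‖ₑ ^ 2 := by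
        rw [lintegral_lintegral_swap hmeas.aemeasurable]
        refine lintegral_congr fun s => lintegral_mul_const _ (Measurable.ennreal_ofReal ?_)
        exact measurable_poissonKernel_zero (measurable_coe_fourierChar.const_mul _)
          measurable_const
    _ = ∫⁻ s in Icc (0 : ℝ) 1, ‖u (𝐞 s)‖ₑ ^ 2 := by
        refine lintegral_congr fun s => ?_
        rw [lintegral_poissonKernel_comp hdil hnorm (Circle.norm_coe _)]
        simp [poissonKernel_def]

end Circle

section Torus

variable {n : ℕ}

lemma polydisc_eq_ball (n : ℕ) : polydisc n = ball 0 1 := by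
  ext z
  rw [mem_ball_zero_iff, pi_norm_lt_iff one_pos]
  rfl

lemma closedPolydisc_eq_closedBall (n : ℕ) : closedPolydisc n = closedBall 0 1 := by
  ext z
  rw [mem_closedBall_zero_iff, pi_norm_le_iff_of_nonneg zero_le_one]
  rfl

lemma isOpen_polydisc (n : ℕ) : IsOpen (polydisc n) := polydisc_eq_ball n ▸ isOpen_ball

lemma isCompact_closedPolydisc (n : ℕ) : IsCompact (closedPolydisc n) :=
  closedPolydisc_eq_closedBall n ▸ isCompact_closedBall 0 1

lemma closure_polydisc (n : ℕ) : closure (polydisc n) = closedPolydisc n := by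
  rw [polydisc_eq_ball, closedPolydisc_eq_closedBall, closure_ball _ one_ne_zero]

lemma polydisc_subset_closedPolydisc (n : ℕ) : polydisc n ⊆ closedPolydisc n :=
  closure_polydisc n ▸ subset_closure

lemma smul_mem_polydisc {z : Fin n → ℂ} (hz : z ∈ closedPolydisc n) {c : ℂ} (hc : ‖c‖ < 1) :
    c • z ∈ polydisc n := fun j => by
  rw [Pi.smul_apply, norm_smul]
  exact (mul_le_of_le_one_right (norm_nonneg c) (hz j)).trans_lt hc

lemma ofReal_smul_mem_polydisc {z : Fin n → ℂ} (hz : z ∈ closedPolydisc n) {r : ℝ} (h0 : 0 ≤ r)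
    (h1 : r < 1) : (r : ℂ) • z ∈ polydisc n :=
  smul_mem_polydisc hz (by rwa [Complex.norm_real, Real.norm_of_nonneg h0])

lemma smul_mem_closedPolydisc {z : Fin n → ℂ} (hz : z ∈ closedPolydisc n) {c : ℂ}
    (hc : ‖c‖ ≤ 1) : c • z ∈ closedPolydisc n := fun j => by
  rw [Pi.smul_apply, norm_smul]
  exact mul_le_one₀ hc (norm_nonneg _) (hz j)

lemma mapsTo_closedPolydisc {Φ : (Fin n → ℂ) → (Fin n → ℂ)}
    (hc : ContinuousOn Φ (closedPolydisc n)) (hmap : MapsTo Φ (polydisc n) (polydisc n)) :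
    MapsTo Φ (closedPolydisc n) (closedPolydisc n) := by
  rw [← closure_polydisc] at hc ⊢
  exact hmap.closure_of_continuousOn hc

/-- The `1`-periodic parametrization `θ ↦ (exp (2πiθ_j))_j` of the torus. -/
def torusExp (θ : Fin n → ℝ) : Fin n → ℂ := fun j => (𝐞 (θ j) : ℂ)

/-- The unit cube, on which `torusExp` carries Lebesgue measure to the Haar measure of the torus. -/
def unitCube (n : ℕ) : Set (Fin n → ℝ) := univ.pi fun _ => Icc 0 1

lemma volume_unitCube (n : ℕ) : volume (unitCube n) = 1 := by
  rw [unitCube, volume_pi_pi]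
  simp

lemma measurableSet_unitCube (n : ℕ) : MeasurableSet (unitCube n) :=
  MeasurableSet.univ_pi fun _ => measurableSet_Icc

lemma isCompact_unitCube (n : ℕ) : IsCompact (unitCube n) :=
  isCompact_univ_pi fun _ => isCompact_Icc

lemma torusExp_mem_torus (θ : Fin n → ℝ) : torusExp θ ∈ torus n := fun _ => Circle.norm_coe _

lemma torus_subset_closedPolydisc (n : ℕ) : torus n ⊆ closedPolydisc n := fun _ hz j => (hz j).le

lemma torusExp_mem_closedPolydisc (θ : Fin n → ℝ) : torusExp θ ∈ closedPolydisc n :=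
  torus_subset_closedPolydisc n (torusExp_mem_torus θ)

lemma continuous_torusExp : Continuous (torusExp (n := n)) :=
  continuous_pi fun j => continuous_coe_fourierChar.comp (continuous_apply j)

lemma exists_torusExp_eq {ζ : Fin n → ℂ} (hζ : ζ ∈ torus n) : ∃ θ, torusExp θ = ζ := by
  choose θ hθ using fun j => exists_fourierChar_eq (hζ j)
  exact ⟨θ, funext hθ⟩

lemma torusExp_const_add (t : ℝ) (θ : Fin n → ℝ) :
    torusExp ((fun _ => t) + θ) = (𝐞 t : ℂ) • torusExp θ := by
  ext j
  simp [torusExp, AddChar.map_add_eq_mul]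

lemma torusExp_add_of_mem_span {a : Fin n → ℝ}
    (ha : a ∈ Submodule.span ℤ (range (Pi.basisFun ℝ (Fin n)))) (θ : Fin n → ℝ) :
    torusExp (a + θ) = torusExp θ := by
  ext j
  obtain ⟨k, hk⟩ : ∃ k : ℤ, (k : ℝ) = a j := by
    simpa using ((Pi.basisFun ℝ (Fin n)).mem_span_iff_repr_mem ℤ a).1 ha j
  have hperiod : (𝐞 (k : ℝ) : ℂ) = 1 := by
    rw [Real.fourierChar_apply, Complex.exp_eq_one_iff]
    exact ⟨k, by push_cast; ring⟩
  rw [torusExp, Pi.add_apply, ← hk, AddChar.map_add_eq_mul, Circle.coe_mul, hperiod, one_mul]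
  rfl

lemma setLIntegral_vadd {E : Type*} [AddGroup E] [MeasurableSpace E] [MeasurableAdd E]
    {μ : Measure E} [μ.IsAddLeftInvariant] (a : E) {s : Set E} (F : E → ℝ≥0∞) :
    ∫⁻ x in a +ᵥ s, F x ∂μ = ∫⁻ x in s, F (a + x) ∂μ := by
  rw [← (measurePreserving_add_left μ a).setLIntegral_comp_preimage_emb
    (measurableEmbedding_addLeft a)]
  congr 2
  exact preimage_image_eq s (add_right_injective a)

lemma lintegral_torusExp_add (G : (Fin n → ℂ) → ℝ≥0∞) (a : Fin n → ℝ) :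
    ∫⁻ θ in unitCube n, G (torusExp (a + θ)) = ∫⁻ θ in unitCube n, G (torusExp θ) := by
  have : Countable (Submodule.span ℤ (range (Pi.basisFun ℝ (Fin n)))).toAddSubgroup :=
    inferInstanceAs (Countable (Submodule.span ℤ (range (Pi.basisFun ℝ (Fin n)))))
  have hdom := ZSpan.isAddFundamentalDomain' (Pi.basisFun ℝ (Fin n)) volume
  have hae : unitCube n =ᵐ[volume] ZSpan.fundamentalDomain (Pi.basisFun ℝ (Fin n)) := by
    rw [ZSpan.fundamentalDomain_pi_basisFun]
    exact Measure.pi_Ico_ae_eq_pi_Icc.symm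
  simp only [setLIntegral_congr hae]
  rw [← setLIntegral_vadd a fun θ => G (torusExp θ)]
  refine (hdom.vadd_of_comm a).setLIntegral_eq hdom _ fun g θ => ?_
  exact congrArg G (torusExp_add_of_mem_span g.2 θ)

lemma lintegral_torusExp_eq_lintegral_smul {G : (Fin n → ℂ) → ℝ≥0∞}
    (hG : Measurable fun θ : Fin n → ℝ => G (torusExp θ)) :
    ∫⁻ θ in unitCube n, G (torusExp θ) =
      ∫⁻ θ in unitCube n, ∫⁻ t in Icc (0 : ℝ) 1, G ((𝐞 t : ℂ) • torusExp θ) := by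
  have hjoint : Measurable fun p : (Fin n → ℝ) × ℝ => G ((𝐞 p.2 : ℂ) • torusExp p.1) := by
    simp only [← torusExp_const_add]
    exact hG.comp ((measurable_pi_lambda _ fun _ => measurable_snd).add measurable_fst)
  rw [lintegral_lintegral_swap hjoint.aemeasurable]
  simp only [← torusExp_const_add, lintegral_torusExp_add G]
  simp

lemma hardySq_eq (g : (Fin n → ℂ) → ℂ) :
    hardySq n g =
      ⨆ r ∈ Ioo (0 : ℝ) 1, ∫⁻ θ in unitCube n, ‖g ((r : ℂ) • torusExp θ)‖ₑ ^ 2 := by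
  refine iSup_congr fun r => iSup_congr fun _ => lintegral_congr fun θ => ?_
  rw [ENNReal.ofReal_pow (norm_nonneg _), ofReal_norm]
  congr 3
  ext j
  simp [torusExp, Real.fourierChar_apply, mul_right_comm]

end Torus

section Slices

variable {n : ℕ} {u : (Fin n → ℂ) → ℂ}

lemma continuousOn_closedPolydisc {F : Type*} [NormedAddCommGroup F] [NormedSpace ℂ F]
    {v : (Fin n → ℂ) → F} (hv : DiffContOnCl ℂ v (polydisc n)) :
    ContinuousOn v (closedPolydisc n) :=
  closure_polydisc n ▸ hv.continuousOn

lemma continuous_comp_torusExp {F : Type*} [TopologicalSpace F] {v : (Fin n → ℂ) → F}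
    (hv : ContinuousOn v (closedPolydisc n)) : Continuous fun θ => v (torusExp θ) :=
  hv.comp_continuous continuous_torusExp torusExp_mem_closedPolydisc

lemma diffContOnCl_slice (hu : DiffContOnCl ℂ u (polydisc n)) {ζ : Fin n → ℂ}
    (hζ : ζ ∈ closedPolydisc n) : DiffContOnCl ℂ (fun z : ℂ => u (z • ζ)) (ball 0 1) := by
  refine hu.comp (g := fun z : ℂ => z • ζ) ?_ fun z hz => ?_
  · exact (differentiable_id.smul_const ζ).diffContOnCl
  · exact smul_mem_polydisc hζ (mem_ball_zero_iff.1 hz)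

lemma lintegral_poissonKernel_comp_torusExp {v : (Fin n → ℂ) → ℂ}
    (hv : DiffContOnCl ℂ v (polydisc n)) (hlt : ∀ z ∈ closedPolydisc n, ‖v z‖ < 1) {η : ℂ}
    (hη : ‖η‖ = 1) :
    ∫⁻ θ in unitCube n, ENNReal.ofReal (poissonKernel 0 (v (torusExp θ)) η) =
      ENNReal.ofReal (poissonKernel 0 (v 0) η) := by
  have hmeas : Measurable fun θ : Fin n → ℝ =>
      ENNReal.ofReal (poissonKernel 0 (v (torusExp θ)) η) :=
    (measurable_poissonKernel_zero (continuous_comp_torusExp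
      (continuousOn_closedPolydisc hv)).measurable measurable_const).ennreal_ofReal
  have hslice : ∀ θ : Fin n → ℝ, ∫⁻ t in Icc (0 : ℝ) 1,
      ENNReal.ofReal (poissonKernel 0 (v ((𝐞 t : ℂ) • torusExp θ)) η) =
        ENNReal.ofReal (poissonKernel 0 (v 0) η) := fun θ => by
    have hθ := torusExp_mem_closedPolydisc θ
    rw [lintegral_poissonKernel_comp (diffContOnCl_slice hv hθ)
      (fun z hz => hlt _ (smul_mem_closedPolydisc hθ hz)) hη, zero_smul]
  rw [lintegral_torusExp_eq_lintegral_smul (G := fun z => ENNReal.ofReal (poissonKernel 0 (v z) η))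
    hmeas]
  simp only [hslice, lintegral_const, Measure.restrict_apply_univ, volume_unitCube, mul_one]

lemma lintegral_enorm_sq_dilate_torusExp_le (hu : DiffContOnCl ℂ u (polydisc n)) {r : ℝ}
    (h0 : 0 ≤ r) (h1 : r < 1) :
    ∫⁻ θ in unitCube n, ‖u ((r : ℂ) • torusExp θ)‖ₑ ^ 2 ≤
      ∫⁻ θ in unitCube n, ‖u (torusExp θ)‖ₑ ^ 2 := by
  have hcont := continuousOn_closedPolydisc hu
  have hdil : Continuous fun θ : Fin n → ℝ => u ((r : ℂ) • torusExp θ) :=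
    hcont.comp_continuous ((continuous_const_smul (r : ℂ)).comp continuous_torusExp) fun θ =>
      polydisc_subset_closedPolydisc n
        (ofReal_smul_mem_polydisc (torusExp_mem_closedPolydisc θ) h0 h1)
  rw [lintegral_torusExp_eq_lintegral_smul (G := fun z => ‖u ((r : ℂ) • z)‖ₑ ^ 2)
      (hdil.measurable.enorm.pow_const 2),
    lintegral_torusExp_eq_lintegral_smul (G := fun z => ‖u z‖ₑ ^ 2)
      ((continuous_comp_torusExp hcont).measurable.enorm.pow_const 2)]
  refine lintegral_mono fun θ => ?_
  simpa only [mul_smul] using lintegral_enorm_sq_dilate_le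
    (diffContOnCl_slice hu (torusExp_mem_closedPolydisc θ)) h0 h1

end Slices

section ProductIntegrals

variable {α : Type*} [MeasurableSpace α] {n : ℕ}

lemma measurable_insertNth (m : Fin (n + 1)) :
    Measurable fun p : α × (Fin n → α) => (m.insertNth p.1 p.2 : Fin (n + 1) → α) :=
  (MeasurableEquiv.piFinSuccAbove (fun _ => α) m).symm.measurable

lemma lintegral_pi_insertNth (μ : Measure α) [SigmaFinite μ] (m : Fin (n + 1))
    {g : (Fin (n + 1) → α) → ℝ≥0∞} (hg : Measurable g) :
    ∫⁻ x, g x ∂Measure.pi (fun _ : Fin (n + 1) => μ) =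
      ∫⁻ s, ∫⁻ y, g (m.insertNth s y) ∂Measure.pi (fun _ : Fin n => μ) ∂μ := by
  rw [← ((measurePreserving_piFinSuccAbove (fun _ => μ) m).symm _).lintegral_comp hg]
  exact lintegral_prod _ (hg.comp (measurable_insertNth m)).aemeasurable

lemma setLIntegral_univ_pi_insertNth (J : Set ℝ) (m : Fin (n + 1))
    {g : (Fin (n + 1) → ℝ) → ℝ≥0∞} (hg : Measurable g) :
    ∫⁻ x in univ.pi fun _ => J, g x =
      ∫⁻ s in J, ∫⁻ y in univ.pi fun _ : Fin n => J, g (m.insertNth s y) := by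
  simp only [volume_pi, Measure.restrict_pi_pi]
  exact lintegral_pi_insertNth _ m hg

lemma lintegral_univ_pi_prod (J : Set ℝ) {n : ℕ} {g : Fin n → ℝ → ℝ≥0∞}
    (hg : ∀ i, Measurable (g i)) :
    ∫⁻ x in univ.pi fun _ : Fin n => J, ∏ i, g i (x i) = ∏ i, ∫⁻ t in J, g i t := by
  induction n with
  | zero => simp [volume_pi, -pi_univ_Icc]
  | succ n ih =>
    have hmeas : Measurable fun x : Fin (n + 1) → ℝ => ∏ i, g i (x i) :=
      Finset.measurable_prod _ fun i _ => (hg i).comp (measurable_pi_apply i)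
    have htail : Measurable fun y : Fin n → ℝ => ∏ i : Fin n, g i.succ (y i) :=
      Finset.measurable_prod _ fun i _ => (hg i.succ).comp (measurable_pi_apply i)
    rw [setLIntegral_univ_pi_insertNth J 0 hmeas]
    simp only [Fin.prod_univ_succ, Fin.insertNth_zero', Fin.cons_zero, Fin.cons_succ,
      lintegral_const_mul _ htail, ih fun i => hg i.succ, lintegral_mul_const _ (hg 0)]

end ProductIntegrals

section PoissonSchur

variable {n : ℕ}

/-- The Poisson kernel of the polydisc with pole `w` at the point `η` of the torus: the product of
the one-variable kernels, valued in `ℝ≥0∞` because it is only ever integrated. -/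
def polyPoisson (w η : Fin n → ℂ) : ℝ≥0∞ := ∏ j, ENNReal.ofReal (poissonKernel 0 (w j) (η j))

lemma measurable_polyPoisson {α : Type*} [MeasurableSpace α] {f g : α → Fin n → ℂ}
    (hf : Measurable f) (hg : Measurable g) : Measurable fun a => polyPoisson (f a) (g a) :=
  Finset.measurable_fun_prod _ fun j _ =>
    (measurable_poissonKernel_zero ((measurable_pi_apply j).comp hf)
      ((measurable_pi_apply j).comp hg)).ennreal_ofReal

lemma torusExp_insertNth (m : Fin (n + 1)) (s : ℝ) (y : Fin n → ℝ) :
    torusExp (m.insertNth s y) = m.insertNth (𝐞 s : ℂ) (torusExp y) := by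
  ext j
  refine m.succAboveCases ?_ (fun i => ?_) j
  · simp [torusExp]
  · simp [torusExp]

lemma insertNth_mem_closedPolydisc (m : Fin (n + 1)) {z : ℂ} (hz : ‖z‖ ≤ 1) {w : Fin n → ℂ}
    (hw : w ∈ closedPolydisc n) : m.insertNth z w ∈ closedPolydisc (n + 1) := fun j => by
  refine m.succAboveCases ?_ (fun i => ?_) j
  · simpa using hz
  · simpa only [Fin.insertNth_apply_succAbove] using hw i

lemma differentiable_insertNth (m : Fin (n + 1)) :
    Differentiable ℂ fun p : ℂ × (Fin n → ℂ) => (m.insertNth p.1 p.2 : Fin (n + 1) → ℂ) := by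
  refine differentiable_pi.2 fun j => ?_
  refine m.succAboveCases ?_ (fun i => ?_) j
  · simp only [Fin.insertNth_apply_same]
    exact differentiable_fst
  · simp only [Fin.insertNth_apply_succAbove]
    fun_prop

lemma diffContOnCl_comp_insertNth {F : (Fin (n + 1) → ℂ) → ℂ}
    (hF : DifferentiableOn ℂ F (closedPolydisc (n + 1))) (m : Fin (n + 1)) {w : Fin n → ℂ}
    (hw : w ∈ closedPolydisc n) :
    DiffContOnCl ℂ (fun z : ℂ => F (m.insertNth z w)) (ball 0 1) := by
  have hins : Differentiable ℂ fun z : ℂ => (m.insertNth z w : Fin (n + 1) → ℂ) :=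
    (differentiable_insertNth m).comp (differentiable_id.prodMk (differentiable_const w))
  refine (hF.comp hins.differentiableOn fun z hz => ?_).diffContOnCl
  rw [closure_ball _ one_ne_zero, mem_closedBall_zero_iff] at hz
  exact insertNth_mem_closedPolydisc m hz hw

lemma differentiableOn_comp_insertNth {F : (Fin (n + 1) → ℂ) → ℂ}
    (hF : DifferentiableOn ℂ F (closedPolydisc (n + 1))) (m : Fin (n + 1)) {z : ℂ}
    (hz : ‖z‖ ≤ 1) :
    DifferentiableOn ℂ (fun w : Fin n → ℂ => F (m.insertNth z w)) (closedPolydisc n) := by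
  have hins : Differentiable ℂ fun w : Fin n → ℂ => (m.insertNth z w : Fin (n + 1) → ℂ) :=
    (differentiable_insertNth m).comp ((differentiable_const z).prodMk differentiable_id)
  exact hF.comp hins.differentiableOn fun w hw => insertNth_mem_closedPolydisc m hz hw

lemma polyPoisson_insertNth (m : Fin (n + 1)) (z : ℂ) (w : Fin n → ℂ) (η : Fin (n + 1) → ℂ) :
    polyPoisson η (m.insertNth z w) =
      ENNReal.ofReal (poissonKernel 0 (η m) z) * polyPoisson (m.removeNth η) w := by
  rw [polyPoisson, Fin.prod_univ_succAbove _ m]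
  simp [polyPoisson, Fin.removeNth]

lemma enorm_sq_le_lintegral_polyPoisson {F : (Fin n → ℂ) → ℂ}
    (hF : DifferentiableOn ℂ F (closedPolydisc n)) {w : Fin n → ℂ} (hw : w ∈ polydisc n) :
    ‖F w‖ₑ ^ 2 ≤ ∫⁻ θ in unitCube n, polyPoisson w (torusExp θ) * ‖F (torusExp θ)‖ₑ ^ 2 := by
  induction n with
  | zero =>
    have hsingle : ∀ θ : Fin 0 → ℝ, torusExp θ = w := fun θ => Subsingleton.elim _ _
    simp [hsingle, polyPoisson, volume_unitCube]
  | succ n ih =>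
    have hmeas : Measurable fun θ : Fin (n + 1) → ℝ =>
        polyPoisson w (torusExp θ) * ‖F (torusExp θ)‖ₑ ^ 2 :=
      (measurable_polyPoisson measurable_const continuous_torusExp.measurable).mul
        ((continuous_comp_torusExp hF.continuousOn).measurable.enorm.pow_const 2)
    have htail : Fin.removeNth 0 w ∈ polydisc n := fun j => hw _
    calc ‖F w‖ₑ ^ 2 = ‖F (Fin.insertNth 0 (w 0) (Fin.removeNth 0 w))‖ₑ ^ 2 := by
          rw [Fin.insertNth_self_removeNth]
      _ ≤ ∫⁻ s in Icc (0 : ℝ) 1, ENNReal.ofReal (poissonKernel 0 (w 0) (𝐞 s)) *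
            ‖F (Fin.insertNth 0 (𝐞 s : ℂ) (Fin.removeNth 0 w))‖ₑ ^ 2 :=
          enorm_sq_le_lintegral_poissonKernel (diffContOnCl_comp_insertNth hF 0
            (polydisc_subset_closedPolydisc n htail)) (hw 0)
      _ ≤ ∫⁻ s in Icc (0 : ℝ) 1, ENNReal.ofReal (poissonKernel 0 (w 0) (𝐞 s)) *
            ∫⁻ y in unitCube n, polyPoisson (Fin.removeNth 0 w) (torusExp y) *
              ‖F (Fin.insertNth 0 (𝐞 s : ℂ) (torusExp y))‖ₑ ^ 2 :=
          lintegral_mono fun s => by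
            gcongr
            exact ih (differentiableOn_comp_insertNth hF 0 (Circle.norm_coe _).le) htail
      _ = ∫⁻ θ in unitCube (n + 1), polyPoisson w (torusExp θ) * ‖F (torusExp θ)‖ₑ ^ 2 := by
          refine Eq.trans (lintegral_congr fun s => ?_)
            (setLIntegral_univ_pi_insertNth _ 0 hmeas).symm
          rw [← lintegral_const_mul' _ _ ENNReal.ofReal_ne_top]
          refine lintegral_congr fun y => ?_
          rw [torusExp_insertNth, polyPoisson_insertNth, mul_assoc]

/-- Schur's test: only the mass of the kernel in the first variable matters, because the Poisson
kernel reproduces `F` in the second one. -/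
lemma lintegral_comp_enorm_sq_le {α : Type*} [MeasurableSpace α] {μ : Measure α} [SFinite μ]
    {w : α → Fin n → ℂ} (hw : Measurable w) (hmem : ∀ a, w a ∈ polydisc n) {C : ℝ≥0∞}
    (hC : ∀ η ∈ torus n, ∫⁻ a, polyPoisson (w a) η ∂μ ≤ C) {F : (Fin n → ℂ) → ℂ}
    (hF : DifferentiableOn ℂ F (closedPolydisc n)) :
    ∫⁻ a, ‖F (w a)‖ₑ ^ 2 ∂μ ≤ C * ∫⁻ θ in unitCube n, ‖F (torusExp θ)‖ₑ ^ 2 := by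
  have hFmeas : Measurable fun θ : Fin n → ℝ => ‖F (torusExp θ)‖ₑ ^ 2 :=
    (continuous_comp_torusExp hF.continuousOn).measurable.enorm.pow_const 2
  have hjoint : Measurable fun p : α × (Fin n → ℝ) =>
      polyPoisson (w p.1) (torusExp p.2) * ‖F (torusExp p.2)‖ₑ ^ 2 :=
    (measurable_polyPoisson (hw.comp measurable_fst)
      (continuous_torusExp.measurable.comp measurable_snd)).mul (hFmeas.comp measurable_snd)
  calc ∫⁻ a, ‖F (w a)‖ₑ ^ 2 ∂μ
    _ ≤ ∫⁻ a, (∫⁻ θ in unitCube n, polyPoisson (w a) (torusExp θ) * ‖F (torusExp θ)‖ₑ ^ 2) ∂μ :=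
        lintegral_mono fun a => enorm_sq_le_lintegral_polyPoisson hF (hmem a)
    _ = ∫⁻ θ in unitCube n, (∫⁻ a, polyPoisson (w a) (torusExp θ) ∂μ) *
          ‖F (torusExp θ)‖ₑ ^ 2 := by
        rw [lintegral_lintegral_swap hjoint.aemeasurable]
        exact lintegral_congr fun θ =>
          lintegral_mul_const _ (measurable_polyPoisson hw measurable_const)
    _ ≤ ∫⁻ θ in unitCube n, C * ‖F (torusExp θ)‖ₑ ^ 2 :=
        lintegral_mono fun θ => by gcongr; exact hC _ (torusExp_mem_torus θ)
    _ = C * ∫⁻ θ in unitCube n, ‖F (torusExp θ)‖ₑ ^ 2 := lintegral_const_mul _ hFmeas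

lemma differentiableOn_comp_ofReal_smul {f : (Fin n → ℂ) → ℂ}
    (hf : DifferentiableOn ℂ f (polydisc n)) {R : ℝ} (h0 : 0 ≤ R) (h1 : R < 1) :
    DifferentiableOn ℂ (fun z => f ((R : ℂ) • z)) (closedPolydisc n) :=
  hf.comp (differentiable_id.const_smul (R : ℂ)).differentiableOn fun _ hz =>
    ofReal_smul_mem_polydisc hz h0 h1

lemma lintegral_comp_dilate_le_hardySq {φ : (Fin n → ℂ) → (Fin n → ℂ)}
    (hφ : DiffContOnCl ℂ φ (polydisc n))
    (hclosed : MapsTo φ (closedPolydisc n) (closedPolydisc n)) {C : ℝ≥0∞} {R : ℝ}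
    (hR0 : 0 < R) (hR1 : R < 1)
    (hC : ∀ η ∈ torus n, ∫⁻ θ in unitCube n, polyPoisson ((R : ℂ) • φ (torusExp θ)) η ≤ C)
    {f : (Fin n → ℂ) → ℂ} (hf : DifferentiableOn ℂ f (polydisc n)) {r : ℝ}
    (hr : r ∈ Ioo (0 : ℝ) 1) :
    ∫⁻ θ in unitCube n, ‖f ((R : ℂ) • (R : ℂ) • φ ((r : ℂ) • torusExp θ))‖ₑ ^ 2 ≤
      C * hardySq n f := by
  have hfR := differentiableOn_comp_ofReal_smul hf hR0.le hR1
  have hmapsTo : MapsTo (fun z => (R : ℂ) • φ z) (closedPolydisc n) (closedPolydisc n) :=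
    fun z hz => polydisc_subset_closedPolydisc n
      (ofReal_smul_mem_polydisc (hclosed hz) hR0.le hR1)
  have hu : DiffContOnCl ℂ (fun z => f ((R : ℂ) • (R : ℂ) • φ z)) (polydisc n) := by
    refine ⟨hfR.comp (hφ.differentiableOn.const_smul (R : ℂ))
      (hmapsTo.mono_left (polydisc_subset_closedPolydisc n)), ?_⟩
    rw [closure_polydisc]
    exact hfR.continuousOn.comp ((continuousOn_closedPolydisc hφ).const_smul (R : ℂ)) hmapsTo
  have hw : Measurable fun θ : Fin n → ℝ => (R : ℂ) • φ (torusExp θ) :=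
    (continuous_comp_torusExp (continuousOn_closedPolydisc hφ)).measurable.const_smul (R : ℂ)
  calc ∫⁻ θ in unitCube n, ‖f ((R : ℂ) • (R : ℂ) • φ ((r : ℂ) • torusExp θ))‖ₑ ^ 2
    _ ≤ ∫⁻ θ in unitCube n, ‖f ((R : ℂ) • (R : ℂ) • φ (torusExp θ))‖ₑ ^ 2 :=
        lintegral_enorm_sq_dilate_torusExp_le hu hr.1.le hr.2
    _ ≤ C * ∫⁻ θ in unitCube n, ‖f ((R : ℂ) • torusExp θ)‖ₑ ^ 2 :=
        lintegral_comp_enorm_sq_le hw (fun θ => ofReal_smul_mem_polydisc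
          (hclosed (torusExp_mem_closedPolydisc θ)) hR0.le hR1) hC hfR
    _ ≤ C * hardySq n f := by
        rw [hardySq_eq]
        gcongr
        exact le_iSup₂_of_le R ⟨hR0, hR1⟩ le_rfl

lemma continuous_comp_dilate {φ : (Fin n → ℂ) → (Fin n → ℂ)}
    (hφ : ContinuousOn φ (closedPolydisc n))
    (hclosed : MapsTo φ (closedPolydisc n) (closedPolydisc n)) {R : ℝ} (hR0 : 0 ≤ R) (hR1 : R < 1)
    {f : (Fin n → ℂ) → ℂ} (hf : DifferentiableOn ℂ f (polydisc n)) {r : ℝ} (hr0 : 0 ≤ r)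
    (hr1 : r < 1) :
    Continuous fun θ : Fin n → ℝ => f ((R : ℂ) • (R : ℂ) • φ ((r : ℂ) • torusExp θ)) := by
  have hmem : ∀ θ : Fin n → ℝ, (r : ℂ) • torusExp θ ∈ closedPolydisc n := fun θ =>
    polydisc_subset_closedPolydisc n
      (ofReal_smul_mem_polydisc (torusExp_mem_closedPolydisc θ) hr0 hr1)
  have hinner : Continuous fun θ : Fin n → ℝ => φ ((r : ℂ) • torusExp θ) :=
    hφ.comp_continuous ((continuous_const_smul (r : ℂ)).comp continuous_torusExp) hmem
  exact (differentiableOn_comp_ofReal_smul hf hR0 hR1).continuousOn.comp_continuous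
    ((continuous_const_smul (R : ℂ)).comp hinner) fun θ =>
      polydisc_subset_closedPolydisc n (ofReal_smul_mem_polydisc (hclosed (hmem θ)) hR0 hR1)

lemma tendsto_comp_dilate_nhdsLT_one {f : (Fin n → ℂ) → ℂ}
    (hf : DifferentiableOn ℂ f (polydisc n)) {w : Fin n → ℂ} (hw : w ∈ polydisc n) :
    Tendsto (fun R : ℝ => f ((R : ℂ) • (R : ℂ) • w)) (𝓝[<] 1) (𝓝 (f w)) := by
  have hcont : Continuous fun R : ℝ => (R : ℂ) • (R : ℂ) • w := by fun_prop
  have hlim : Tendsto (fun R : ℝ => (R : ℂ) • (R : ℂ) • w) (𝓝 1) (𝓝 w) := by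
    simpa using hcont.tendsto 1
  have hfw : ContinuousAt f w :=
    (hf.differentiableAt ((isOpen_polydisc n).mem_nhds hw)).continuousAt
  exact hfw.tendsto.comp (hlim.mono_left nhdsWithin_le_nhds)

theorem bddHardy_of_lintegral_polyPoisson_le {φ : (Fin n → ℂ) → (Fin n → ℂ)}
    (hφ : DiffContOnCl ℂ φ (polydisc n)) (hmap : MapsTo φ (polydisc n) (polydisc n)) {C : ℝ≥0∞}
    (hCtop : C ≠ ∞) {R₀ : ℝ} (hR₀ : R₀ ∈ Ioo (0 : ℝ) 1)
    (hC : ∀ R ∈ Ico R₀ 1, ∀ η ∈ torus n,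
      ∫⁻ θ in unitCube n, polyPoisson ((R : ℂ) • φ (torusExp θ)) η ≤ C) :
    bddHardy n φ := by
  have hcont := continuousOn_closedPolydisc hφ
  have hclosed := mapsTo_closedPolydisc hcont hmap
  refine ⟨C.toReal + 1, by positivity, fun f hf => ?_⟩
  suffices hle : hardySq n (fun z => f (φ z)) ≤ C * hardySq n f by
    refine hle.trans ?_
    gcongr
    exact ENNReal.le_ofReal_iff_toReal_le hCtop (by positivity) |>.2 (by linarith)
  rw [hardySq_eq fun z => f (φ z)]
  refine iSup₂_le fun r hr => ?_
  obtain ⟨R, -, hR, hRlim⟩ := exists_seq_strictMono_tendsto' hR₀.2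
  have hR0 : ∀ k, 0 < R k := fun k => hR₀.1.trans (hR k).1
  have hRleft : Tendsto R atTop (𝓝[<] 1) :=
    tendsto_nhdsWithin_iff.2 ⟨hRlim, Eventually.of_forall fun k => (hR k).2⟩
  have hmem : ∀ θ : Fin n → ℝ, (r : ℂ) • torusExp θ ∈ polydisc n := fun θ =>
    ofReal_smul_mem_polydisc (torusExp_mem_closedPolydisc θ) hr.1.le hr.2
  let g : ℕ → (Fin n → ℝ) → ℂ := fun k θ =>
    f ((R k : ℂ) • (R k : ℂ) • φ ((r : ℂ) • torusExp θ))
  have hg : ∀ k, Measurable fun θ => ‖g k θ‖ₑ ^ 2 := fun k =>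
    (continuous_comp_dilate hcont hclosed (hR0 k).le (hR k).2 hf hr.1.le
      hr.2).measurable.enorm.pow_const 2
  have hlim : ∀ θ, Tendsto (fun k => ‖g k θ‖ₑ ^ 2) atTop
      (𝓝 (‖f (φ ((r : ℂ) • torusExp θ))‖ₑ ^ 2)) := fun θ =>
    ENNReal.Tendsto.pow
      ((tendsto_comp_dilate_nhdsLT_one hf (hmap (hmem θ))).comp hRleft).enorm
  calc ∫⁻ θ in unitCube n, ‖f (φ ((r : ℂ) • torusExp θ))‖ₑ ^ 2
    _ = ∫⁻ θ in unitCube n, liminf (fun k => ‖g k θ‖ₑ ^ 2) atTop :=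
        lintegral_congr fun θ => (hlim θ).liminf_eq.symm
    _ ≤ liminf (fun k => ∫⁻ θ in unitCube n, ‖g k θ‖ₑ ^ 2) atTop := lintegral_liminf_le hg
    _ ≤ liminf (fun _ : ℕ => C * hardySq n f) atTop :=
        liminf_le_liminf (Eventually.of_forall fun k => lintegral_comp_dilate_le_hardySq hφ hclosed
          (hR0 k) (hR k).2 (hC _ ⟨(hR k).1.le, (hR k).2⟩) hf hr)
    _ = C * hardySq n f := liminf_const _

end PoissonSchur

section CauchyKernel

/-- The Cauchy kernel of width `e` on the line, without the factor `1 / π`; it vanishes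
identically for `e = 0`. -/
def cauchyKernel (e t : ℝ) : ℝ := e / (e ^ 2 + t ^ 2)

lemma cauchyKernel_nonneg {e : ℝ} (he : 0 ≤ e) (t : ℝ) : 0 ≤ cauchyKernel e t := by
  unfold cauchyKernel; positivity

lemma measurable_cauchyKernel_comp {α : Type*} [MeasurableSpace α] {f g : α → ℝ}
    (hf : Measurable f) (hg : Measurable g) : Measurable fun a => cauchyKernel (f a) (g a) :=
  hf.div ((hf.pow_const 2).add (hg.pow_const 2))

lemma lintegral_cauchyKernel_le {e : ℝ} (he : 0 ≤ e) (s : ℝ) :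
    ∫⁻ x : ℝ, ENNReal.ofReal (cauchyKernel e (x - s)) ≤ ENNReal.ofReal Real.pi := by
  rcases he.eq_or_lt with rfl | hpos
  · simp [cauchyKernel]
  have hpdf : ∀ x, ENNReal.ofReal (cauchyKernel e (x - s)) =
      ENNReal.ofReal Real.pi * ProbabilityTheory.cauchyPDF s e.toNNReal x := fun x => by
    rw [ProbabilityTheory.cauchyPDF_def, ProbabilityTheory.cauchyPDFReal_def,
      ← ENNReal.ofReal_mul Real.pi_pos.le, Real.coe_toNNReal e he, cauchyKernel, add_comm,
      div_eq_mul_inv, mul_assoc, mul_inv_cancel_left₀ Real.pi_ne_zero]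
  simp only [hpdf]
  rw [lintegral_const_mul' _ _ ENNReal.ofReal_ne_top,
    ProbabilityTheory.lintegral_cauchyPDF_eq_one s (by simpa using hpos), mul_one]

lemma setLIntegral_cauchyKernel_add_one_le {e : ℝ} (he : 0 ≤ e) (s : ℝ) :
    ∫⁻ x in Icc (-1 : ℝ) 1, ENNReal.ofReal (cauchyKernel e (x - s) + 1) ≤
      ENNReal.ofReal (Real.pi + 2) := by
  calc ∫⁻ x in Icc (-1 : ℝ) 1, ENNReal.ofReal (cauchyKernel e (x - s) + 1)
      = ∫⁻ x in Icc (-1 : ℝ) 1, (ENNReal.ofReal (cauchyKernel e (x - s)) + 1) := by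
        refine lintegral_congr fun x => ?_
        rw [ENNReal.ofReal_add (cauchyKernel_nonneg he _) zero_le_one, ENNReal.ofReal_one]
    _ = (∫⁻ x in Icc (-1 : ℝ) 1, ENNReal.ofReal (cauchyKernel e (x - s))) + ENNReal.ofReal 2 := by
        rw [lintegral_add_right _ measurable_const, setLIntegral_one, Real.volume_Icc]
        norm_num
    _ ≤ ENNReal.ofReal Real.pi + ENNReal.ofReal 2 := by
        gcongr
        exact (setLIntegral_le_lintegral _ _).trans (lintegral_cauchyKernel_le he s)
    _ = ENNReal.ofReal (Real.pi + 2) := (ENNReal.ofReal_add Real.pi_pos.le zero_le_two).symm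

lemma cauchyKernel_le_of_le_two_mul_add {E e t K : ℝ} (hE : 0 ≤ E) (he : 0 ≤ e) (hK : 0 ≤ K)
    (hEe : E ≤ 2 * e + K * t ^ 2) (heE : e ≤ 2 * E + K * t ^ 2) :
    cauchyKernel E t ≤ (48 + 5 * K) * (cauchyKernel e t + 1) := by
  have hc := cauchyKernel_nonneg he t
  rcases le_or_gt (2 * K * t ^ 2) e with hsmall | hlarge
  · have hE_lower : e / 4 ≤ E := by linarith
    have hE_upper : E ≤ 3 * e := by linarith
    suffices cauchyKernel E t ≤ 48 * cauchyKernel e t by nlinarith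
    rcases he.eq_or_lt with rfl | hpos
    · simp [cauchyKernel, show E = 0 by linarith]
    · have hEpos : 0 < E := by linarith
      unfold cauchyKernel
      rw [← mul_div_assoc, div_le_div_iff₀ (by positivity) (by positivity)]
      have hsq : e ^ 2 / 16 ≤ E ^ 2 := by nlinarith
      have hnum : E * (e ^ 2 + t ^ 2) ≤ 3 * e * (e ^ 2 + t ^ 2) := by gcongr
      have hden : e * (e ^ 2 / 16) ≤ e * E ^ 2 := by gcongr
      have hpos' : 0 ≤ e * t ^ 2 := by positivity
      linarith
  · have ht : 0 < t ^ 2 := by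
      refine (sq_nonneg t).lt_of_ne fun h0 => ?_
      rw [← h0] at hlarge
      linarith
    suffices cauchyKernel E t ≤ 5 * K by nlinarith
    unfold cauchyKernel
    rw [div_le_iff₀ (by positivity)]
    nlinarith [mul_nonneg hK (sq_nonneg E)]

/-- A nonnegative function comparable at any two points up to the squared distance, as a
nonnegative `C²` function is; such functions serve as variable widths of Cauchy kernels. -/
structure SlowlyVarying {α : Type*} [PseudoMetricSpace α] (K : ℝ) (H : α → ℝ) : Prop where
  nonneg : ∀ x, 0 ≤ H x
  le_two_mul_add : ∀ x y, H y ≤ 2 * H x + K * dist x y ^ 2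

variable {K : ℝ}

lemma SlowlyVarying.comp_isometry {α β : Type*} [PseudoMetricSpace α] [PseudoMetricSpace β]
    {H : β → ℝ} (hH : SlowlyVarying K H) {f : α → β} (hf : Isometry f) :
    SlowlyVarying K (H ∘ f) where
  nonneg x := hH.nonneg (f x)
  le_two_mul_add x y := by
    simpa only [Function.comp_apply, hf.dist_eq] using hH.le_two_mul_add (f x) (f y)

lemma SlowlyVarying.cauchyKernel_le {α : Type*} [PseudoMetricSpace α] {H : α → ℝ}
    (hH : SlowlyVarying K H) (hK : 0 ≤ K) {x y : α} {t : ℝ} (hxy : dist x y ≤ |t|) :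
    cauchyKernel (H x) t ≤ (48 + 5 * K) * (cauchyKernel (H y) t + 1) := by
  have hsq : dist x y ^ 2 ≤ t ^ 2 := by rw [← sq_abs t]; gcongr
  refine cauchyKernel_le_of_le_two_mul_add (hH.nonneg x) (hH.nonneg y) hK
    ((hH.le_two_mul_add y x).trans ?_) ((hH.le_two_mul_add x y).trans ?_)
  · rw [dist_comm]; gcongr
  · gcongr

lemma isometry_insertNth {n : ℕ} (m : Fin (n + 1)) (x : ℝ) :
    Isometry fun y : Fin n → ℝ => (m.insertNth x y : Fin (n + 1) → ℝ) :=
  Isometry.of_dist_eq fun y z => by simp [Fin.dist_insertNth_insertNth]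

/-- In the coordinate where `α - s` is largest the width may be frozen at `s`, since it changes
by at most the square of that coordinate. -/
lemma prod_cauchyKernel_le_sum {n : ℕ} (hK : 0 ≤ K) {E : Fin (n + 1) → (Fin (n + 1) → ℝ) → ℝ}
    (hE : ∀ i, SlowlyVarying K (E i)) (s α : Fin (n + 1) → ℝ) :
    ∏ i, ENNReal.ofReal (cauchyKernel (E i α) (α i - s i)) ≤
      ∑ m, ENNReal.ofReal (48 + 5 * K) *
        (ENNReal.ofReal (cauchyKernel (E m s) (α m - s m) + 1) *
          ∏ i, ENNReal.ofReal (cauchyKernel (E (m.succAbove i) α)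
            (α (m.succAbove i) - s (m.succAbove i)))) := by
  obtain ⟨m, hm⟩ := Finite.exists_max fun i => |α i - s i|
  refine le_trans ?_ (Finset.single_le_sum (fun _ _ => zero_le) (Finset.mem_univ m))
  rw [Fin.prod_univ_succAbove _ m, ← mul_assoc, ← ENNReal.ofReal_mul (by positivity)]
  gcongr
  exact (hE m).cauchyKernel_le hK ((dist_pi_le_iff (abs_nonneg _)).2 hm)

lemma setLIntegral_cauchyKernel_add_one_mul_le {n : ℕ} {e : ℝ} (he : 0 ≤ e) (s : ℝ)
    (m : Fin (n + 1)) {G : (Fin (n + 1) → ℝ) → ℝ≥0∞} (hG : Measurable G) {M : ℝ≥0∞}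
    (hM : ∀ x, ∫⁻ y in univ.pi fun _ : Fin n => Icc (-1 : ℝ) 1, G (m.insertNth x y) ≤ M) :
    ∫⁻ α in univ.pi fun _ : Fin (n + 1) => Icc (-1 : ℝ) 1,
        ENNReal.ofReal (cauchyKernel e (α m - s) + 1) * G α ≤
      ENNReal.ofReal (Real.pi + 2) * M := by
  have hmeas : Measurable fun x => ENNReal.ofReal (cauchyKernel e (x - s) + 1) :=
    ((measurable_cauchyKernel_comp measurable_const
      (measurable_id.sub_const s)).add_const 1).ennreal_ofReal
  have hprod : Measurable fun α : Fin (n + 1) → ℝ =>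
      ENNReal.ofReal (cauchyKernel e (α m - s) + 1) * G α :=
    (hmeas.comp (measurable_pi_apply m)).mul hG
  rw [setLIntegral_univ_pi_insertNth _ m hprod]
  simp only [Fin.insertNth_apply_same, lintegral_const_mul' _ _ ENNReal.ofReal_ne_top]
  calc _ ≤ ∫⁻ x in Icc (-1 : ℝ) 1, ENNReal.ofReal (cauchyKernel e (x - s) + 1) * M :=
        lintegral_mono fun x => by gcongr; exact hM x
    _ ≤ _ := by
        rw [lintegral_mul_const _ hmeas]
        gcongr
        exact setLIntegral_cauchyKernel_add_one_le he s

lemma lintegral_prod_cauchyKernel_le (hK : 0 ≤ K) {n : ℕ} {E : Fin n → (Fin n → ℝ) → ℝ}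
    (hmeas : ∀ i, Measurable (E i)) (hE : ∀ i, SlowlyVarying K (E i)) (s : Fin n → ℝ) :
    ∫⁻ α in univ.pi fun _ : Fin n => Icc (-1 : ℝ) 1,
        ∏ i, ENNReal.ofReal (cauchyKernel (E i α) (α i - s i)) ≤
      n.factorial * (ENNReal.ofReal (48 + 5 * K) * ENNReal.ofReal (Real.pi + 2)) ^ n := by
  induction n with
  | zero => simp [volume_pi, Measure.pi_pi, -pi_univ_Icc]
  | succ n ih =>
    set D := ENNReal.ofReal (48 + 5 * K)
    set M : ℝ≥0∞ := n.factorial * (D * ENNReal.ofReal (Real.pi + 2)) ^ n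
    have hrest : ∀ m : Fin (n + 1), Measurable fun α : Fin (n + 1) → ℝ =>
        ∏ i, ENNReal.ofReal (cauchyKernel (E (m.succAbove i) α)
          (α (m.succAbove i) - s (m.succAbove i))) := fun m =>
      Finset.measurable_prod _ fun i _ => (measurable_cauchyKernel_comp (hmeas _)
        ((measurable_pi_apply _).sub_const _)).ennreal_ofReal
    have hfrozen : ∀ m : Fin (n + 1), Measurable fun α : Fin (n + 1) → ℝ =>
        ENNReal.ofReal (cauchyKernel (E m s) (α m - s m) + 1) := fun m =>
      ((measurable_cauchyKernel_comp measurable_const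
        ((measurable_pi_apply m).sub_const _)).add_const 1).ennreal_ofReal
    calc _ ≤ _ := lintegral_mono (prod_cauchyKernel_le_sum hK hE s)
      _ = _ := lintegral_finsetSum _ fun m _ => ((hfrozen m).mul (hrest m)).const_mul D
      _ ≤ ∑ _m : Fin (n + 1), D * (ENNReal.ofReal (Real.pi + 2) * M) := by
          refine Finset.sum_le_sum fun m _ => ?_
          rw [lintegral_const_mul' _ _ ENNReal.ofReal_ne_top]
          gcongr
          refine setLIntegral_cauchyKernel_add_one_mul_le ((hE m).nonneg s) (s m) m (hrest m)
            fun x => ?_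
          simp only [Fin.insertNth_apply_succAbove]
          exact ih (fun i => (hmeas _).comp (isometry_insertNth m x).continuous.measurable)
            (fun i => (hE _).comp_isometry (isometry_insertNth m x)) fun i => s (m.succAbove i)
      _ = _ := by
          rw [Finset.sum_const, Finset.card_univ, Fintype.card_fin, nsmul_eq_mul,
            Nat.factorial_succ, pow_succ]
          push_cast
          ring

end CauchyKernel

section C2Functions

variable {E F : Type*} [NormedAddCommGroup E] [NormedSpace ℝ E]
  [NormedAddCommGroup F] [NormedSpace ℝ F]

lemma exists_eventually_norm_sub_fderiv_le {f : E → F} {x₀ : E} (hf : ContDiffAt ℝ 2 f x₀) :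
    ∃ K ≥ (0 : ℝ), ∀ᶠ p in 𝓝 (x₀, x₀),
      ‖f p.2 - f p.1 - fderiv ℝ f p.1 (p.2 - p.1)‖ ≤ K * dist p.1 p.2 ^ 2 := by
  obtain ⟨K, t, ht, hlip⟩ :=
    (hf.fderiv_right (m := 1) (by norm_num)).exists_lipschitzOnWith
  have hdiff : ∀ᶠ x in 𝓝 x₀, DifferentiableAt ℝ f x :=
    (hf.eventually (by simp)).mono fun x hx => hx.differentiableAt (by norm_num)
  obtain ⟨ε, hε, hball⟩ := Metric.eventually_nhds_iff_ball.1 (hdiff.and ht)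
  refine ⟨K, K.coe_nonneg, ?_⟩
  filter_upwards [prod_mem_nhds (ball_mem_nhds x₀ hε) (ball_mem_nhds x₀ hε)] with p hp
  have hseg : segment ℝ p.1 p.2 ⊆ ball x₀ ε := (convex_ball x₀ ε).segment_subset hp.1 hp.2
  have hderiv : ∀ z ∈ segment ℝ p.1 p.2, HasFDerivWithinAt f (fderiv ℝ f z) (segment ℝ p.1 p.2) z :=
    fun z hz => (hball z (hseg hz)).1.hasFDerivAt.hasFDerivWithinAt
  have hbound : ∀ z ∈ segment ℝ p.1 p.2,
      ‖fderiv ℝ f z - fderiv ℝ f p.1‖ ≤ K * dist p.1 p.2 := fun z hz => by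
    refine (hlip.norm_sub_le (hball z (hseg hz)).2 (hball _ hp.1).2).trans ?_
    rw [dist_comm, dist_eq_norm]
    gcongr
    exact norm_sub_le_of_mem_segment hz
  refine ((convex_segment _ _).norm_image_sub_le_of_norm_hasFDerivWithin_le' hderiv hbound
    (left_mem_segment ℝ _ _) (right_mem_segment ℝ _ _)).trans_eq ?_
  rw [← dist_eq_norm, dist_comm p.2, pow_two, mul_assoc]

/-- Compare the Taylor expansions of `h` at `x` in the directions `y - x` and `x - y`: the linear
terms cancel. -/
lemma exists_eventually_le_two_mul_add {h : E → ℝ} {x₀ : E} (hh : ContDiffAt ℝ 2 h x₀)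
    (hnonneg : ∀ x, 0 ≤ h x) :
    ∃ K ≥ (0 : ℝ), ∀ᶠ p in 𝓝 (x₀, x₀), h p.2 ≤ 2 * h p.1 + K * dist p.1 p.2 ^ 2 := by
  obtain ⟨K, hK, htaylor⟩ := exists_eventually_norm_sub_fderiv_le hh
  have hreflect : Tendsto (fun p : E × E => (p.1, p.1 - (p.2 - p.1))) (𝓝 (x₀, x₀))
      (𝓝 (x₀, x₀)) := by
    have : Continuous fun p : E × E => (p.1, p.1 - (p.2 - p.1)) := by fun_prop
    simpa using this.tendsto (x₀, x₀)
  refine ⟨2 * K, by positivity, ?_⟩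
  filter_upwards [htaylor, hreflect.eventually htaylor] with p hp hp'
  rw [sub_sub_cancel_left, map_neg, dist_self_sub_right, ← dist_eq_norm p.2, dist_comm p.2,
    Real.norm_eq_abs] at hp'
  rw [Real.norm_eq_abs] at hp
  linarith [le_abs_self (h p.2 - h p.1 - fderiv ℝ h p.1 (p.2 - p.1)), hnonneg (p.1 - (p.2 - p.1)),
    le_abs_self (h (p.1 - (p.2 - p.1)) - h p.1 - -(fderiv ℝ h p.1 (p.2 - p.1)))]

lemma exists_eventually_dist_le_mul_dist [FiniteDimensional ℝ E] {f : E → E} {f' : E →L[ℝ] E}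
    {x₀ : E} (hf : HasStrictFDerivAt f f' x₀) (hdet : f'.det ≠ 0) :
    ∃ L ≥ (0 : ℝ), ∀ᶠ p in 𝓝 (x₀, x₀), dist p.1 p.2 ≤ L * dist (f p.1) (f p.2) := by
  have hinducing : IsInducing f' :=
    (f'.toContinuousLinearEquivOfDetNeZero hdet).toHomeomorph.isInducing
  obtain ⟨L, hL, hbound⟩ := (hf.isTheta_sub hinducing).2.exists_nonneg
  refine ⟨L, hL, hbound.bound.mono fun p hp => ?_⟩
  simpa only [dist_eq_norm] using hp

end C2Functions

section ChangeOfWidth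

lemma exists_slowlyVarying_extension {α ι : Type*} [PseudoMetricSpace α] [MeasurableSpace α]
    [OpensMeasurableSpace α] [Nonempty ι] {p : ι → α} {h : ι → ℝ} {K : ℝ} (hK : 0 ≤ K)
    (hnonneg : ∀ i, 0 ≤ h i) (hslow : ∀ i j, h j ≤ 2 * h i + K * dist (p i) (p j) ^ 2) :
    ∃ H : α → ℝ, Measurable H ∧ SlowlyVarying (2 * K) H ∧
      ∀ i, h i ≤ H (p i) ∧ H (p i) ≤ 2 * h i := by
  set F : ι → α → ℝ := fun i x => 2 * h i + K * dist (p i) x ^ 2 with hF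
  have hF_nonneg : ∀ i x, 0 ≤ F i x := fun i x => by
    have := hnonneg i
    positivity
  have hbdd : ∀ x, BddBelow (range fun i => F i x) := fun x =>
    ⟨0, by rintro _ ⟨i, rfl⟩; exact hF_nonneg i x⟩
  have hF_cont : ∀ i, Continuous (F i) := fun i => by fun_prop
  refine ⟨fun x => ⨅ i, F i x, ?_, ⟨fun x => le_ciInf fun i => hF_nonneg i x, fun x y => ?_⟩,
    fun i => ⟨le_ciInf fun j => hslow j i, ?_⟩⟩
  · exact (upperSemicontinuous_ciInf hbdd fun i => (hF_cont i).upperSemicontinuous).measurable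
  · rw [Real.mul_iInf_of_nonneg zero_le_two, ← sub_le_iff_le_add]
    refine le_ciInf fun i => sub_le_iff_le_add.2 ((ciInf_le (hbdd y) i).trans ?_)
    have htri : dist (p i) y ^ 2 ≤ 2 * dist (p i) x ^ 2 + 2 * dist x y ^ 2 :=
      (pow_le_pow_left₀ dist_nonneg (dist_triangle _ x _) 2).trans
        (by linarith [add_sq_le (a := dist (p i) x) (b := dist x y)])
    simp only [hF]
    nlinarith [hnonneg i]
  · exact (ciInf_le (hbdd _) i).trans_eq (by simp [hF])

lemma ofReal_mul_setLIntegral_comp_le {E : Type*} [NormedAddCommGroup E] [NormedSpace ℝ E]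
    [FiniteDimensional ℝ E] [MeasurableSpace E] [BorelSpace E] (μ : Measure E) [μ.IsAddHaarMeasure]
    {f : E → E} {f' : E → E →L[ℝ] E} {s : Set E} (hs : MeasurableSet s)
    (hf' : ∀ x ∈ s, HasFDerivWithinAt f (f' x) s x) (hf : InjOn f s) {d : ℝ}
    (hd : ∀ x ∈ s, d ≤ |(f' x).det|) (g : E → ℝ≥0∞) :
    ENNReal.ofReal d * ∫⁻ x in s, g (f x) ∂μ ≤ ∫⁻ x in f '' s, g x ∂μ := by
  rw [lintegral_image_eq_lintegral_abs_det_fderiv_mul μ hs hf' hf,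
    ← lintegral_const_mul' _ _ ENNReal.ofReal_ne_top]
  refine setLIntegral_mono' hs fun x hx => ?_
  gcongr
  exact hd x hx

lemma cauchyKernel_le_four_mul {h E : ℝ} (hh : 0 ≤ h) (hhE : h ≤ E) (hEh : E ≤ 2 * h) (t : ℝ) :
    cauchyKernel h t ≤ 4 * cauchyKernel E t := by
  rcases hh.eq_or_lt with rfl | hpos
  · simp [cauchyKernel, show E = 0 by linarith]
  have hE : 0 < E := by linarith
  have hsq : E ^ 2 ≤ 4 * h ^ 2 := by nlinarith
  unfold cauchyKernel
  rw [← mul_div_assoc, div_le_div_iff₀ (by positivity) (by positivity)]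
  calc h * (E ^ 2 + t ^ 2) ≤ E * (4 * h ^ 2 + 4 * t ^ 2) := by gcongr; nlinarith [sq_nonneg t]
    _ = 4 * E * (h ^ 2 + t ^ 2) := by ring

lemma poissonKernel_zero_le_cauchyKernel {z η η₀ : ℂ} (hz : ‖z‖ < 1) (hη : ‖η‖ = 1)
    (hη₀ : ‖η₀‖ = 1) {t : ℝ} (ht : |t| ≤ 2 * |(conj η₀ * (z - η)).im|) :
    poissonKernel 0 z η ≤ 8 * cauchyKernel (1 - ‖z‖ ^ 2) t := by
  have hz0 := norm_nonneg z
  have hradial : 1 - ‖z‖ ^ 2 ≤ 2 * ‖η - z‖ := by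
    have := norm_sub_norm_le η z
    rw [hη] at this
    nlinarith
  have htangential : |t| ≤ 2 * ‖η - z‖ := by
    refine ht.trans ?_
    gcongr
    refine (Complex.abs_im_le_norm _).trans_eq ?_
    rw [norm_mul, RCLike.norm_conj, hη₀, one_mul, norm_sub_rev]
  have hpos : 0 < 1 - ‖z‖ ^ 2 := by nlinarith
  have hsum : ((1 - ‖z‖ ^ 2) ^ 2 + t ^ 2) / 8 ≤ ‖η - z‖ ^ 2 := by
    have hr := pow_le_pow_left₀ hpos.le hradial 2
    have ht' := pow_le_pow_left₀ (abs_nonneg t) htangential 2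
    rw [sq_abs] at ht'
    linarith
  rw [poissonKernel_def, cauchyKernel, sub_zero, sub_zero, hη, one_pow]
  calc (1 - ‖z‖ ^ 2) / ‖η - z‖ ^ 2
      ≤ (1 - ‖z‖ ^ 2) / (((1 - ‖z‖ ^ 2) ^ 2 + t ^ 2) / 8) := by gcongr
    _ = _ := by field_simp

end ChangeOfWidth

section ContactPoints

variable {n : ℕ}

lemma setLIntegral_prod_cauchyKernel_comp_le {N : Set (Fin n → ℝ)} (hN : MeasurableSet N)
    (hne : N.Nonempty) {Ψ : (Fin n → ℝ) → Fin n → ℝ}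
    {Ψ' : (Fin n → ℝ) → (Fin n → ℝ) →L[ℝ] Fin n → ℝ}
    (hΨ' : ∀ x ∈ N, HasFDerivWithinAt Ψ (Ψ' x) N x) (hinj : InjOn Ψ N)
    (hmaps : MapsTo Ψ N (univ.pi fun _ => Icc (-1) 1)) {d : ℝ} (hd : ∀ x ∈ N, d ≤ |(Ψ' x).det|)
    {h : Fin n → (Fin n → ℝ) → ℝ} (hnonneg : ∀ i, ∀ x ∈ N, 0 ≤ h i x) {K : ℝ} (hK : 0 ≤ K)
    (hslow : ∀ i, ∀ x ∈ N, ∀ y ∈ N, h i y ≤ 2 * h i x + K * dist (Ψ x) (Ψ y) ^ 2)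
    (s : Fin n → ℝ) :
    ENNReal.ofReal d * ∫⁻ x in N, ∏ i, ENNReal.ofReal (cauchyKernel (h i x) (Ψ x i - s i)) ≤
      4 ^ n * (n.factorial *
        (ENNReal.ofReal (48 + 5 * (2 * K)) * ENNReal.ofReal (Real.pi + 2)) ^ n) := by
  have : Nonempty N := hne.to_subtype
  choose E hE_meas hE_slow hE using fun i => exists_slowlyVarying_extension (p := N.domRestrict Ψ)
    (h := N.domRestrict (h i)) hK (fun x => hnonneg i x x.2)
    (fun x y => hslow i x x.2 y y.2)
  set G : (Fin n → ℝ) → ℝ≥0∞ := fun α => ∏ i, ENNReal.ofReal (cauchyKernel (E i α) (α i - s i))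
  have hwidth : ∀ x ∈ N, ∏ i, ENNReal.ofReal (cauchyKernel (h i x) (Ψ x i - s i)) ≤
      4 ^ n * G (Ψ x) := fun x hx => by
    calc _ ≤ ∏ i, (4 * ENNReal.ofReal (cauchyKernel (E i (Ψ x)) (Ψ x i - s i))) := by
          refine Finset.prod_le_prod' fun i _ => ?_
          rw [← ENNReal.ofReal_ofNat 4, ← ENNReal.ofReal_mul zero_le_four]
          exact ENNReal.ofReal_le_ofReal (cauchyKernel_le_four_mul (hnonneg i x hx)
            (hE i ⟨x, hx⟩).1 (hE i ⟨x, hx⟩).2 _)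
      _ = 4 ^ n * G (Ψ x) := by simp [G, Finset.prod_mul_distrib]
  calc _ ≤ ENNReal.ofReal d * ∫⁻ x in N, 4 ^ n * G (Ψ x) := by
        gcongr _ * ?_
        exact setLIntegral_mono' hN hwidth
    _ = 4 ^ n * (ENNReal.ofReal d * ∫⁻ x in N, G (Ψ x)) := by
        rw [lintegral_const_mul' _ _ (by finiteness), mul_left_comm]
    _ ≤ 4 ^ n * ∫⁻ α in Ψ '' N, G α := by
        gcongr _ * ?_
        exact ofReal_mul_setLIntegral_comp_le volume hN hΨ' hinj hd G
    _ ≤ _ := by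
        gcongr _ * ?_
        exact (lintegral_mono_set hmaps.image_subset).trans
          (lintegral_prod_cauchyKernel_le (by positivity) hE_meas hE_slow s)

lemma exists_eventually_le_abs_det_fderiv {Ψ : (Fin n → ℝ) → Fin n → ℝ} {θ₀ : Fin n → ℝ}
    (hΨ : ContDiffAt ℝ 1 Ψ θ₀) (hdet : (fderiv ℝ Ψ θ₀).det ≠ 0) :
    ∃ d > (0 : ℝ), ∀ᶠ θ in 𝓝 θ₀, DifferentiableAt ℝ Ψ θ ∧ d ≤ |(fderiv ℝ Ψ θ).det| := by
  have hpos := abs_pos.2 hdet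
  have hcont : ContinuousAt (fun θ => |(fderiv ℝ Ψ θ).det|) θ₀ :=
    (ContinuousLinearMap.continuous_det.continuousAt.comp
      (hΨ.continuousAt_fderiv one_ne_zero)).abs
  refine ⟨_, half_pos hpos, ?_⟩
  filter_upwards [hΨ.eventually (by simp), hcont.eventually (lt_mem_nhds (half_lt_self hpos))]
    with θ hdiff hdet' using ⟨hdiff.differentiableAt one_ne_zero, hdet'.le⟩

lemma exists_eventually_width_le {E ι : Type*} [NormedAddCommGroup E] [NormedSpace ℝ E]
    [FiniteDimensional ℝ E] [Finite ι] {f : E → E} {f' : E →L[ℝ] E} {x₀ : E}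
    (hf : HasStrictFDerivAt f f' x₀) (hdet : f'.det ≠ 0) {h : ι → E → ℝ}
    (hh : ∀ i, ContDiffAt ℝ 2 (h i) x₀) (hnonneg : ∀ i x, 0 ≤ h i x) :
    ∃ K ≥ (0 : ℝ), ∀ᶠ p in 𝓝 (x₀, x₀), ∀ a ≥ (0 : ℝ), ∀ b ∈ Icc (0 : ℝ) 1, ∀ i,
      a + b * h i p.2 ≤ 2 * (a + b * h i p.1) + K * dist (f p.1) (f p.2) ^ 2 := by
  cases nonempty_fintype ι
  obtain ⟨L, -, hdist⟩ := exists_eventually_dist_le_mul_dist hf hdet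
  choose k hk hslow using fun i => exists_eventually_le_two_mul_add (hh i) (hnonneg i)
  have hsum : 0 ≤ ∑ i, k i := Finset.sum_nonneg fun i _ => hk i
  refine ⟨(∑ i, k i) * L ^ 2, by positivity, ?_⟩
  filter_upwards [hdist, eventually_all.2 hslow] with p hp hp' a ha b hb i
  have hki : k i ≤ ∑ i, k i := Finset.single_le_sum (fun j _ => hk j) (Finset.mem_univ i)
  have hD : k i * dist p.1 p.2 ^ 2 ≤ (∑ i, k i) * L ^ 2 * dist (f p.1) (f p.2) ^ 2 := by
    rw [mul_assoc, ← mul_pow]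
    gcongr
  have hb_mul := mul_le_mul_of_nonneg_left ((hp' i).trans (add_le_add_right hD _)) hb.1
  have hb_one := mul_le_of_le_one_left
    (show 0 ≤ (∑ i, k i) * L ^ 2 * dist (f p.1) (f p.2) ^ 2 by positivity) hb.2
  linarith

lemma exists_mem_nhds_setLIntegral_prod_cauchyKernel_le {Ψ : (Fin n → ℝ) → Fin n → ℝ}
    {θ₀ : Fin n → ℝ} (hΨ : ContDiffAt ℝ 1 Ψ θ₀) (hdet : (fderiv ℝ Ψ θ₀).det ≠ 0)
    (hmaps : ∀ θ, Ψ θ ∈ univ.pi fun _ => Icc (-1 : ℝ) 1) {h : Fin n → (Fin n → ℝ) → ℝ}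
    (hh : ∀ i, ContDiffAt ℝ 2 (h i) θ₀) (hnonneg : ∀ i θ, 0 ≤ h i θ) :
    ∃ N ∈ 𝓝 θ₀, ∃ C : ℝ≥0∞, C ≠ ∞ ∧ ∀ a ≥ (0 : ℝ), ∀ b ∈ Icc (0 : ℝ) 1, ∀ s : Fin n → ℝ,
      ∫⁻ θ in N, ∏ i, ENNReal.ofReal (cauchyKernel (a + b * h i θ) (Ψ θ i - s i)) ≤ C := by
  have hstrict : HasStrictFDerivAt Ψ (fderiv ℝ Ψ θ₀) θ₀ := hΨ.hasStrictFDerivAt one_ne_zero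
  obtain ⟨d, hd, hderiv⟩ := exists_eventually_le_abs_det_fderiv hΨ hdet
  obtain ⟨L, -, hdist⟩ := exists_eventually_dist_le_mul_dist hstrict hdet
  obtain ⟨K, hK, hslow⟩ := exists_eventually_width_le hstrict hdet hh hnonneg
  obtain ⟨ε, hε, hpair⟩ := (nhds_basis_ball.prod_self).eventually_iff.1
    ((hdist.and hslow).filter_mono nhds_prod_eq.ge)
  obtain ⟨ε', hε', hball⟩ := Metric.eventually_nhds_iff_ball.1 hderiv
  set N := ball θ₀ (min ε ε')
  have hpairN : ∀ {x y}, x ∈ N → y ∈ N → (x, y) ∈ ball θ₀ ε ×ˢ ball θ₀ ε := fun hx hy =>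
    ⟨ball_subset_ball (min_le_left _ _) hx, ball_subset_ball (min_le_left _ _) hy⟩
  have hballN : N ⊆ ball θ₀ ε' := ball_subset_ball (min_le_right _ _)
  have hinj : InjOn Ψ N := fun x hx y hy hxy => by
    simpa [hxy] using (hpair (hpairN hx hy)).1
  have hd0 : ENNReal.ofReal d ≠ 0 := by simpa using hd
  refine ⟨N, ball_mem_nhds _ (lt_min hε hε'), _, ?_, fun a ha b hb s =>
    (ENNReal.mul_le_iff_le_inv hd0 ENNReal.ofReal_ne_top).1
    (setLIntegral_prod_cauchyKernel_comp_le measurableSet_ball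
      ⟨θ₀, mem_ball_self (lt_min hε hε')⟩
      (fun x hx => (hball x (hballN hx)).1.hasFDerivAt.hasFDerivWithinAt) hinj
      (fun x _ => hmaps x) (fun x hx => (hball x (hballN hx)).2)
      (fun i x _ => add_nonneg ha (mul_nonneg hb.1 (hnonneg i x))) hK
      (fun i x hx y hy => (hpair (hpairN hx hy)).2 a ha b hb i) s)⟩
  finiteness

lemma polyPoisson_smul_le_prod_cauchyKernel {w η η₀ : Fin n → ℂ} (hw : w ∈ closedPolydisc n)
    (hη : η ∈ torus n) (hη₀ : η₀ ∈ torus n) {R : ℝ} (hR : R ∈ Ico (1 / 2 : ℝ) 1) :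
    polyPoisson ((R : ℂ) • w) η ≤ 8 ^ n *
      ∏ i, ENNReal.ofReal (cauchyKernel ((1 - R ^ 2) + R ^ 2 * (1 - ‖w i‖ ^ 2))
        ((conj (η₀ i) * w i).im - (conj (η₀ i) * η i).im / R)) := by
  have hR0 : 0 < R := by linarith [hR.1]
  have hnorm : ∀ i, ‖((R : ℂ) • w) i‖ = R * ‖w i‖ := fun i => by
    rw [Pi.smul_apply, norm_smul, Complex.norm_of_nonneg hR0.le]
  have him : ∀ i, (conj (η₀ i) * (((R : ℂ) • w) i - η i)).im =
      R * ((conj (η₀ i) * w i).im - (conj (η₀ i) * η i).im / R) := fun i => by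
    rw [Pi.smul_apply, smul_eq_mul, mul_sub, mul_left_comm, Complex.sub_im,
      Complex.im_ofReal_mul, mul_sub, mul_div_cancel₀ _ hR0.ne']
  calc polyPoisson ((R : ℂ) • w) η
      ≤ ∏ i, (8 * ENNReal.ofReal (cauchyKernel ((1 - R ^ 2) + R ^ 2 * (1 - ‖w i‖ ^ 2))
          ((conj (η₀ i) * w i).im - (conj (η₀ i) * η i).im / R))) := by
        refine Finset.prod_le_prod' fun i _ => ?_
        rw [← ENNReal.ofReal_ofNat 8, ← ENNReal.ofReal_mul (by norm_num)]
        refine ENNReal.ofReal_le_ofReal ?_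
        rw [show (1 - R ^ 2) + R ^ 2 * (1 - ‖w i‖ ^ 2) = 1 - ‖((R : ℂ) • w) i‖ ^ 2 by
          rw [hnorm]; ring]
        refine poissonKernel_zero_le_cauchyKernel ?_ (hη i) (hη₀ i) ?_
        · rw [hnorm]
          exact mul_lt_one_of_nonneg_of_lt_one_left hR0.le hR.2 (hw i)
        · rw [him, abs_mul, abs_of_pos hR0, ← mul_assoc]
          exact le_mul_of_one_le_left (abs_nonneg _) (by linarith [hR.1])
    _ = _ := by simp [Finset.prod_mul_distrib]

/-- Uniform boundedness, over `R ∈ [1/2, 1)` and `η` in the torus, of the integrals over `s` of the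
Poisson kernels at `η` along the dilate `R • Φ`; this is the local form of the hypothesis of
`bddHardy_of_lintegral_polyPoisson_le`. -/
def PolyPoissonBddOn (Φ : (Fin n → ℝ) → Fin n → ℂ) (s : Set (Fin n → ℝ)) : Prop :=
  ∃ C : ℝ≥0∞, C ≠ ∞ ∧ ∀ R ∈ Ico (1 / 2 : ℝ) 1, ∀ η ∈ torus n,
    ∫⁻ θ in s, polyPoisson ((R : ℂ) • Φ θ) η ≤ C

/-- Near a point of contact the functions `Im (conj (η₀ i) * Φ i)` are local coordinates, in which
the Poisson kernels become Cauchy kernels of width `1 - ‖R * Φ i‖ ^ 2`. -/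
lemma exists_mem_nhds_polyPoissonBddOn_of_det_ne_zero
    {Φ : (Fin n → ℝ) → Fin n → ℂ} {θ₀ : Fin n → ℝ} (hΦ : ContDiffAt ℝ 2 Φ θ₀)
    (hmaps : ∀ θ, Φ θ ∈ closedPolydisc n) {η₀ : Fin n → ℂ} (hη₀ : η₀ ∈ torus n)
    (hdet : (fderiv ℝ (fun θ i => (conj (η₀ i) * Φ θ i).im : (Fin n → ℝ) → Fin n → ℝ) θ₀).det ≠ 0) :
    ∃ N ∈ 𝓝 θ₀, PolyPoissonBddOn Φ N := by
  set Ψ : (Fin n → ℝ) → Fin n → ℝ := fun θ i => (conj (η₀ i) * Φ θ i).im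
  have hΦi := contDiffAt_pi.1 hΦ
  have hΨ : ContDiffAt ℝ 2 Ψ θ₀ := contDiffAt_pi.2 fun i =>
    Complex.imCLM.contDiff.contDiffAt.comp θ₀ (contDiffAt_const.mul (hΦi i))
  have hΨ_maps : ∀ θ, Ψ θ ∈ univ.pi fun _ => Icc (-1 : ℝ) 1 := fun θ i _ => by
    refine abs_le.1 ((Complex.abs_im_le_norm _).trans ?_)
    rw [norm_mul, RCLike.norm_conj, hη₀ i, one_mul]
    exact hmaps θ i
  obtain ⟨N, hN, C, hC, hle⟩ := exists_mem_nhds_setLIntegral_prod_cauchyKernel_le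
    (hΨ.of_le (by norm_num)) hdet hΨ_maps (h := fun i θ => 1 - ‖Φ θ i‖ ^ 2)
    (fun i => contDiffAt_const.sub ((hΦi i).norm_sq ℝ))
    (fun i θ => sub_nonneg.2 (pow_le_one₀ (norm_nonneg _) (hmaps θ i)))
  refine ⟨N, hN, 8 ^ n * C, by finiteness, fun R hR η hη => ?_⟩
  have hR0 : 0 ≤ R := by linarith [hR.1]
  have hRsq : R ^ 2 ≤ 1 := pow_le_one₀ hR0 hR.2.le
  calc _ ≤ _ := lintegral_mono fun θ => polyPoisson_smul_le_prod_cauchyKernel (hmaps θ) hη hη₀ hR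
    _ = _ := lintegral_const_mul' _ _ (by finiteness)
    _ ≤ 8 ^ n * C := by
        gcongr _ * ?_
        exact hle _ (sub_nonneg.2 hRsq) _ ⟨by positivity, hRsq⟩ _

end ContactPoints

section Sufficiency

variable {n : ℕ} {Φ : (Fin n → ℝ) → Fin n → ℂ} {s t : Set (Fin n → ℝ)}
  {φ : (Fin n → ℂ) → (Fin n → ℂ)}

lemma PolyPoissonBddOn.empty : PolyPoissonBddOn Φ ∅ :=
  ⟨0, zero_ne_top, fun R _ η _ => by simp⟩

lemma PolyPoissonBddOn.mono (ht : PolyPoissonBddOn Φ t) (hst : s ⊆ t) : PolyPoissonBddOn Φ s :=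
  let ⟨C, hC, h⟩ := ht
  ⟨C, hC, fun R hR η hη => (lintegral_mono_set hst).trans (h R hR η hη)⟩

lemma PolyPoissonBddOn.union (hs : PolyPoissonBddOn Φ s) (ht : PolyPoissonBddOn Φ t) :
    PolyPoissonBddOn Φ (s ∪ t) :=
  let ⟨C, hC, h⟩ := hs
  let ⟨C', hC', h'⟩ := ht
  ⟨C + C', add_ne_top.2 ⟨hC, hC'⟩, fun R hR η hη =>
    (lintegral_union_le _ _ _).trans (add_le_add (h R hR η hη) (h' R hR η hη))⟩

lemma norm_ofReal_mul_le {R : ℝ} (hR : R ∈ Icc (0 : ℝ) 1) (w : ℂ) : ‖(R : ℂ) * w‖ ≤ ‖w‖ := by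
  rw [norm_mul, Complex.norm_of_nonneg hR.1]
  exact mul_le_of_le_one_left (norm_nonneg w) hR.2

lemma lintegral_poissonKernel_apply_le (hφ : DiffContOnCl ℂ φ (polydisc n))
    (hmap : MapsTo φ (polydisc n) (polydisc n)) (k : Fin n) {R : ℝ} (hR : R ∈ Ico (0 : ℝ) 1)
    {η : ℂ} (hη : ‖η‖ = 1) :
    ∫⁻ θ in unitCube n, ENNReal.ofReal (poissonKernel 0 (R * φ (torusExp θ) k) η) ≤
      ENNReal.ofReal (2 / (1 - ‖φ 0 k‖)) := by
  have hφk : DiffContOnCl ℂ (fun z => R * φ z k) (polydisc n) :=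
    ⟨(differentiableOn_pi.1 hφ.differentiableOn k).const_mul _,
      continuousOn_const.mul (continuousOn_pi.1 hφ.continuousOn k)⟩
  have hmaps := mapsTo_closedPolydisc (continuousOn_closedPolydisc hφ) hmap
  have hlt : ∀ z ∈ closedPolydisc n, ‖R * φ z k‖ < 1 := fun z hz => by
    rw [norm_mul, Complex.norm_of_nonneg hR.1]
    exact mul_lt_one_of_nonneg_of_lt_one_left hR.1 hR.2 (hmaps hz k)
  have hφ0 : ‖φ 0 k‖ < 1 := hmap (fun _ => by simp : (0 : Fin n → ℂ) ∈ polydisc n) k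
  have hRφ0 : ‖(R : ℂ) * φ 0 k‖ ≤ ‖φ 0 k‖ := norm_ofReal_mul_le (Ico_subset_Icc_self hR) _
  rw [lintegral_poissonKernel_comp_torusExp hφk hlt hη]
  refine ENNReal.ofReal_le_ofReal ((poissonKernel_zero_le (hRφ0.trans_lt hφ0) hη).trans ?_)
  exact div_le_div_of_nonneg_left zero_le_two (sub_pos.2 hφ0) (by linarith)

/-- All Poisson factors but the `k`-th are bounded, and the `k`-th has bounded integral by the mean
value property. -/
lemma exists_mem_nhds_polyPoissonBddOn_of_norm_lt_one (hφ : DiffContOnCl ℂ φ (polydisc n))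
    (hmap : MapsTo φ (polydisc n) (polydisc n)) {θ₀ : Fin n → ℝ} {k : Fin n}
    (hlt : ∀ i ≠ k, ‖φ (torusExp θ₀) i‖ < 1) :
    ∃ N ∈ 𝓝 θ₀, PolyPoissonBddOn (fun θ => φ (torusExp θ)) (N ∩ unitCube n) := by
  have hcont : ∀ i, Continuous fun θ => ‖φ (torusExp θ) i‖ :=
    fun i =>
      (continuous_pi_iff.1 (continuous_comp_torusExp (continuousOn_closedPolydisc hφ)) i).norm
  choose! r hr hr1 using fun i (hi : i ≠ k) => exists_between (hlt i hi)
  have hnhds : ∀ᶠ θ in 𝓝 θ₀, ∀ i, i ≠ k → ‖φ (torusExp θ) i‖ < r i := by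
    refine eventually_all.2 fun i => ?_
    by_cases hi : i = k
    · exact .of_forall fun _ h => absurd hi h
    · exact ((hcont i).continuousAt.eventually_lt_const (hr i hi)).mono fun _ h _ => h
  obtain ⟨N, hNsub, hNopen, hN⟩ := _root_.mem_nhds_iff.1 hnhds
  set A : ℝ≥0∞ := ∏ i ∈ Finset.univ.erase k, ENNReal.ofReal (2 / (1 - r i))
  have hA : A ≠ ∞ := ENNReal.prod_ne_top fun _ _ => ofReal_ne_top
  refine ⟨N, hNopen.mem_nhds hN, A * ENNReal.ofReal (2 / (1 - ‖φ 0 k‖)), by finiteness,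
    fun R hR η hη => ?_⟩
  have hR' : R ∈ Ico (0 : ℝ) 1 := ⟨by linarith [hR.1], hR.2⟩
  have hfactor : ∀ θ ∈ N, ∀ i ≠ k, ENNReal.ofReal (poissonKernel 0 (R * φ (torusExp θ) i) (η i)) ≤
      ENNReal.ofReal (2 / (1 - r i)) := fun θ hθ i hi => by
    have hle : ‖(R : ℂ) * φ (torusExp θ) i‖ ≤ r i :=
      (norm_ofReal_mul_le (Ico_subset_Icc_self hR') _).trans (hNsub hθ i hi).le
    refine ENNReal.ofReal_le_ofReal
      ((poissonKernel_zero_le (hle.trans_lt (hr1 i hi)) (hη i)).trans ?_)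
    exact div_le_div_of_nonneg_left zero_le_two (sub_pos.2 (hr1 i hi)) (by linarith)
  calc ∫⁻ θ in N ∩ unitCube n, polyPoisson ((R : ℂ) • φ (torusExp θ)) η
      ≤ ∫⁻ θ in N ∩ unitCube n,
          A * ENNReal.ofReal (poissonKernel 0 (R * φ (torusExp θ) k) (η k)) := by
        refine setLIntegral_mono' (hNopen.measurableSet.inter (measurableSet_unitCube n))
          fun θ hθ => ?_
        rw [polyPoisson, ← Finset.prod_erase_mul _ _ (Finset.mem_univ k)]
        gcongr ?_ * _
        exact Finset.prod_le_prod' fun i hi => hfactor θ hθ.1 i (Finset.ne_of_mem_erase hi)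
    _ ≤ ∫⁻ θ in unitCube n, A * ENNReal.ofReal (poissonKernel 0 (R * φ (torusExp θ) k) (η k)) :=
        lintegral_mono_set inter_subset_right
    _ ≤ _ := by
        rw [lintegral_const_mul' _ _ hA]
        gcongr
        exact lintegral_poissonKernel_apply_le hφ hmap k hR' (hη k)

/-- Each boundary point is either a nondegenerate contact point, or a point where at
most one coordinate of `φ` is unimodular. -/
theorem bddHardy_of_forall_torusExp (hφ : DiffContOnCl ℂ φ (polydisc n))
    (hmap : MapsTo φ (polydisc n) (polydisc n))
    (hdiff : ContDiff ℝ 2 fun θ => φ (torusExp θ))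
    (hdet : ∀ θ₀, φ (torusExp θ₀) ∈ torus n →
      (fderiv ℝ (fun θ i => (conj (φ (torusExp θ₀) i) * φ (torusExp θ) i).im :
        (Fin n → ℝ) → Fin n → ℝ) θ₀).det ≠ 0)
    (hdeg : ∀ θ₀, φ (torusExp θ₀) ∉ torus n → ∃ k, ∀ i ≠ k, ‖φ (torusExp θ₀) i‖ < 1) :
    bddHardy n φ := by
  have hmaps := mapsTo_closedPolydisc (continuousOn_closedPolydisc hφ) hmap
  have hlocal : ∀ θ₀, ∃ N ∈ 𝓝 θ₀,
      PolyPoissonBddOn (fun θ => φ (torusExp θ)) (N ∩ unitCube n) := fun θ₀ => by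
    by_cases hcontact : φ (torusExp θ₀) ∈ torus n
    · obtain ⟨N, hN, hbdd⟩ := exists_mem_nhds_polyPoissonBddOn_of_det_ne_zero hdiff.contDiffAt
        (fun θ => hmaps (torusExp_mem_closedPolydisc θ)) hcontact (hdet θ₀ hcontact)
      exact ⟨N, hN, hbdd.mono inter_subset_left⟩
    · obtain ⟨k, hk⟩ := hdeg θ₀ hcontact
      exact exists_mem_nhds_polyPoissonBddOn_of_norm_lt_one hφ hmap hk
  have hcube : PolyPoissonBddOn (fun θ => φ (torusExp θ)) (unitCube n ∩ unitCube n) :=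
    (isCompact_unitCube n).induction_on
      (p := fun s => PolyPoissonBddOn (fun θ => φ (torusExp θ)) (s ∩ unitCube n))
      (by simpa only [empty_inter] using .empty)
      (fun s t hst ht => ht.mono (inter_subset_inter_left _ hst))
      (fun s t hs ht => by simpa only [union_inter_distrib_right] using hs.union ht)
      (fun θ₀ _ => let ⟨N, hN, h⟩ := hlocal θ₀
        ⟨N, mem_nhdsWithin_of_mem_nhds hN, h⟩)
  obtain ⟨C, hC, hle⟩ := hcube.mono (inter_self _).ge
  exact bddHardy_of_lintegral_polyPoisson_le hφ hmap hC (by norm_num) hle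

end Sufficiency

section BoundaryDerivative

lemma re_conj_mul_fderiv_eq_zero {E : Type*} [NormedAddCommGroup E] [NormedSpace ℝ E] {f : E → ℂ}
    {f' : E →L[ℝ] ℂ} {x : E} (hf : HasFDerivAt f f' x) (hx : ‖f x‖ = 1) (hle : ∀ y, ‖f y‖ ≤ 1)
    (v : E) : (conj (f x) * f' v).re = 0 := by
  have hmax : IsLocalMax (fun y => ‖f y‖ ^ 2) x := .of_forall fun y => by
    simpa only [hx, one_pow] using pow_le_one₀ (norm_nonneg _) (hle y)
  have hzero := congr($(hmax.hasFDerivAt_eq_zero hf.norm_sq) v)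
  simp only [smul_apply, ContinuousLinearMap.comp_apply, coe_innerSL_apply, Complex.inner,
    Complex.mul_re, Complex.conj_re, Complex.conj_im, mul_neg, sub_neg_eq_add, smul_add,
    nsmul_eq_mul, Nat.cast_ofNat, zero_apply] at hzero
  simp only [Complex.mul_re, Complex.conj_re, Complex.conj_im]
  linarith

variable {n : ℕ} {φ : (Fin n → ℂ) → (Fin n → ℂ)}

/-- The complex Jacobian matrix of `φ` at a point of the closed polydisc. -/
def jacobian (φ : (Fin n → ℂ) → (Fin n → ℂ)) (ζ : Fin n → ℂ) : Matrix (Fin n) (Fin n) ℂ :=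
  Matrix.of fun i j => jacEntry n φ ζ i j

lemma uniqueDiffOn_closedPolydisc (n : ℕ) : UniqueDiffOn ℝ (closedPolydisc n) := by
  rw [closedPolydisc_eq_closedBall]
  exact uniqueDiffOn_convex (convex_closedBall _ _)
    ⟨0, ball_subset_interior_closedBall (mem_ball_self one_pos)⟩

lemma fderivWithin_closedPolydisc_smul (hhol : DifferentiableOn ℂ φ (polydisc n))
    (hsm : ContDiffOn ℝ 1 φ (closedPolydisc n)) {z : Fin n → ℂ} (hz : z ∈ closedPolydisc n)
    (c : ℂ) (v : Fin n → ℂ) :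
    fderivWithin ℝ φ (closedPolydisc n) z (c • v) =
      c • fderivWithin ℝ φ (closedPolydisc n) z v := by
  have hcont : ∀ u, ContinuousOn (fun z => fderivWithin ℝ φ (closedPolydisc n) z u)
      (closedPolydisc n) := fun u =>
    (hsm.continuousOn_fderivWithin (uniqueDiffOn_closedPolydisc n) le_rfl).clm_apply
      continuousOn_const
  have hinterior : EqOn (fun z => fderivWithin ℝ φ (closedPolydisc n) z (c • v))
      (fun z => c • fderivWithin ℝ φ (closedPolydisc n) z v) (polydisc n) := fun z hz => by
    have hnhds := (isOpen_polydisc n).mem_nhds hz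
    have hfderiv := ((hhol.differentiableAt hnhds).hasFDerivAt.restrictScalars ℝ).fderiv
    simp only [fderivWithin_of_mem_nhds (mem_of_superset hnhds (polydisc_subset_closedPolydisc n)),
      hfderiv, ContinuousLinearMap.coe_restrictScalars', map_smul]
  exact hinterior.of_subset_closure (hcont _) ((hcont v).const_smul c)
    (polydisc_subset_closedPolydisc n) (closure_polydisc n).ge hz

lemma fderivWithin_closedPolydisc_eq_mulVec (hhol : DifferentiableOn ℂ φ (polydisc n))
    (hsm : ContDiffOn ℝ 1 φ (closedPolydisc n)) {z : Fin n → ℂ} (hz : z ∈ closedPolydisc n)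
    (u : Fin n → ℂ) :
    fderivWithin ℝ φ (closedPolydisc n) z u = (jacobian φ z).mulVec u := by
  let D : (Fin n → ℂ) →ₗ[ℂ] (Fin n → ℂ) :=
    { toFun := fderivWithin ℝ φ (closedPolydisc n) z
      map_add' := map_add _
      map_smul' := fderivWithin_closedPolydisc_smul hhol hsm hz }
  have hD : jacobian φ z = LinearMap.toMatrix' D := by
    ext i j
    rw [LinearMap.toMatrix'_apply]
    rfl
  rw [hD, ← Matrix.toLin'_apply, Matrix.toLin'_toMatrix']
  rfl

lemma contDiff_torusExp {m : WithTop ℕ∞} : ContDiff ℝ m (torusExp (n := n)) := by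
  refine contDiff_pi.2 fun j => ?_
  simp only [torusExp, Real.fourierChar_apply]
  exact ((Complex.ofRealCLM.contDiff.comp (contDiff_const.mul (contDiff_apply ℝ ℝ j))).mul
    contDiff_const).cexp

lemma hasFDerivAt_torusExp (θ : Fin n → ℝ) :
    HasFDerivAt torusExp (ContinuousLinearMap.pi fun j =>
      ((2 * Real.pi * Complex.I * torusExp θ j) • Complex.ofRealCLM).comp
        (ContinuousLinearMap.proj (R := ℝ) (φ := fun _ : Fin n => ℝ) j)) θ := by
  refine hasFDerivAt_pi.2 fun j => ?_
  have h := (Real.hasDerivAt_fourierChar (θ j)).hasFDerivAt.comp θ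
    (ContinuousLinearMap.proj (R := ℝ) (φ := fun _ : Fin n => ℝ) j).hasFDerivAt
  refine h.congr_fderiv (ContinuousLinearMap.ext fun v => ?_)
  simp [torusExp, mul_comm]

lemma hasFDerivAt_comp_torusExp (hsm : ContDiffOn ℝ 1 φ (closedPolydisc n)) (θ : Fin n → ℝ) :
    HasFDerivAt (fun θ => φ (torusExp θ)) (fderiv ℝ (fun θ => φ (torusExp θ)) θ) θ :=
  ((hsm.comp_contDiff contDiff_torusExp torusExp_mem_closedPolydisc).differentiable
    one_ne_zero θ).hasFDerivAt

lemma fderiv_comp_torusExp_apply (hhol : DifferentiableOn ℂ φ (polydisc n))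
    (hsm : ContDiffOn ℝ 1 φ (closedPolydisc n)) (θ v : Fin n → ℝ) :
    fderiv ℝ (fun θ => φ (torusExp θ)) θ v =
      (2 * Real.pi * Complex.I) • (jacobian φ (torusExp θ)).mulVec fun j => torusExp θ j * v j := by
  have hz := torusExp_mem_closedPolydisc θ
  have hφ := (hsm.differentiableOn one_ne_zero _ hz).hasFDerivWithinAt
  have hcomp := hφ.comp_hasFDerivAt θ (hasFDerivAt_torusExp θ)
    (.of_forall torusExp_mem_closedPolydisc)
  rw [show (fun θ => φ (torusExp θ)) = φ ∘ torusExp from rfl, hcomp.fderiv,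
    ContinuousLinearMap.comp_apply, fderivWithin_closedPolydisc_eq_mulVec hhol hsm hz,
    ← Matrix.mulVec_smul]
  congr 1
  ext j
  simp [mul_assoc]

lemma re_conj_mul_fderiv_comp_torusExp (hsm : ContDiffOn ℝ 1 φ (closedPolydisc n))
    (hmaps : MapsTo φ (closedPolydisc n) (closedPolydisc n)) {θ : Fin n → ℝ}
    (hθ : φ (torusExp θ) ∈ torus n) (v : Fin n → ℝ) (i : Fin n) :
    (conj (φ (torusExp θ) i) * fderiv ℝ (fun θ => φ (torusExp θ)) θ v i).re = 0 :=
  re_conj_mul_fderiv_eq_zero (hasFDerivAt_pi'.1 (hasFDerivAt_comp_torusExp hsm θ) i) (hθ i)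
    (fun θ' => hmaps (torusExp_mem_closedPolydisc θ') i) v

lemma fderiv_comp_torusExp_eq_zero_of_im (hsm : ContDiffOn ℝ 1 φ (closedPolydisc n))
    (hmaps : MapsTo φ (closedPolydisc n) (closedPolydisc n)) {θ v : Fin n → ℝ}
    (hθ : φ (torusExp θ) ∈ torus n)
    (him : ∀ i, (conj (φ (torusExp θ) i) * fderiv ℝ (fun θ => φ (torusExp θ)) θ v i).im = 0) :
    fderiv ℝ (fun θ => φ (torusExp θ)) θ v = 0 := by
  ext i
  have hmul : conj (φ (torusExp θ) i) * fderiv ℝ (fun θ => φ (torusExp θ)) θ v i = 0 :=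
    Complex.ext (re_conj_mul_fderiv_comp_torusExp hsm hmaps hθ v i) (him i)
  refine (mul_eq_zero.1 hmul).resolve_left fun h => ?_
  simpa [(map_eq_zero _).1 h] using hθ i

lemma det_fderiv_im_ne_zero (hhol : DifferentiableOn ℂ φ (polydisc n))
    (hsm : ContDiffOn ℝ 1 φ (closedPolydisc n))
    (hmaps : MapsTo φ (closedPolydisc n) (closedPolydisc n)) {θ₀ : Fin n → ℝ}
    (hθ₀ : φ (torusExp θ₀) ∈ torus n) (hdet : (jacobian φ (torusExp θ₀)).det ≠ 0) :
    (fderiv ℝ (fun θ i => (conj (φ (torusExp θ₀) i) * φ (torusExp θ) i).im :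
      (Fin n → ℝ) → Fin n → ℝ) θ₀).det ≠ 0 := by
  have hΨ : HasFDerivAt (fun θ i => (conj (φ (torusExp θ₀) i) * φ (torusExp θ) i).im)
      (ContinuousLinearMap.pi fun i => Complex.imCLM.comp (conj (φ (torusExp θ₀) i) •
        (ContinuousLinearMap.proj (R := ℝ) (φ := fun _ : Fin n => ℂ) i).comp
          (fderiv ℝ (fun θ => φ (torusExp θ)) θ₀))) θ₀ :=
    hasFDerivAt_pi.2 fun i => Complex.imCLM.hasFDerivAt.comp θ₀
      ((hasFDerivAt_pi'.1 (hasFDerivAt_comp_torusExp hsm θ₀) i).const_mul _)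
  rw [hΨ.fderiv]
  refine fun hdet0 => ?_
  obtain ⟨v, hv, hv0⟩ := Submodule.exists_mem_ne_zero_of_ne_bot
    (LinearMap.det_eq_zero_iff_ker_ne_bot.1 hdet0)
  have hLv := fderiv_comp_torusExp_eq_zero_of_im hsm hmaps hθ₀ fun i => congr_fun hv i
  rw [fderiv_comp_torusExp_apply hhol hsm, smul_eq_zero_iff_right Complex.two_pi_I_ne_zero] at hLv
  refine hv0 (funext fun j => ?_)
  have hj := congr_fun (Matrix.eq_zero_of_mulVec_eq_zero hdet hLv) j
  have hX : torusExp θ₀ j ≠ 0 := norm_ne_zero_iff.1 (by simp [torusExp_mem_torus θ₀ j])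
  exact_mod_cast (mul_eq_zero.1 hj).resolve_left hX

/-- The forms `conj (φ i) * dφ i` are purely imaginary on real vectors, so a complex kernel vector
of the Jacobian splits into real ones. -/
lemma exists_ne_zero_fderiv_comp_torusExp_eq_zero (hhol : DifferentiableOn ℂ φ (polydisc n))
    (hsm : ContDiffOn ℝ 1 φ (closedPolydisc n))
    (hmaps : MapsTo φ (closedPolydisc n) (closedPolydisc n)) {θ₀ : Fin n → ℝ}
    (hθ₀ : φ (torusExp θ₀) ∈ torus n) (hdet : (jacobian φ (torusExp θ₀)).det = 0) :
    ∃ v ≠ 0, fderiv ℝ (fun θ => φ (torusExp θ)) θ₀ v = 0 := by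
  obtain ⟨u, hu, hJu⟩ := Matrix.exists_mulVec_eq_zero_iff.2 hdet
  set L := fderiv ℝ (fun θ => φ (torusExp θ)) θ₀
  set a : Fin n → ℝ := fun j => (conj (torusExp θ₀ j) * u j).re
  set b : Fin n → ℝ := fun j => (conj (torusExp θ₀ j) * u j).im
  have hab : ∀ j, (a j : ℂ) + Complex.I * b j = conj (torusExp θ₀ j) * u j := fun j => by
    rw [mul_comm Complex.I, Complex.re_add_im]
  have hX : ∀ j, torusExp θ₀ j * conj (torusExp θ₀ j) = 1 := fun j => by
    rw [Complex.mul_conj', torusExp_mem_torus θ₀ j]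
    norm_num
  have hu_eq : (fun j => torusExp θ₀ j * (a j : ℂ)) +
      Complex.I • (fun j => torusExp θ₀ j * (b j : ℂ)) = u := by
    ext j
    rw [Pi.add_apply, Pi.smul_apply, smul_eq_mul]
    linear_combination torusExp θ₀ j * hab j + u j * hX j
  have hL : L a + Complex.I • L b = 0 := by
    rw [fderiv_comp_torusExp_apply hhol hsm, fderiv_comp_torusExp_apply hhol hsm, smul_comm,
      ← smul_add, ← Matrix.mulVec_smul, ← Matrix.mulVec_add, hu_eq, hJu, smul_zero]
  have hsum : ∀ i, conj (φ (torusExp θ₀) i) * L a i +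
      Complex.I * (conj (φ (torusExp θ₀) i) * L b i) = 0 := fun i => by
    have hi : L a i + Complex.I * L b i = 0 := congr_fun hL i
    linear_combination conj (φ (torusExp θ₀) i) * hi
  have hre := re_conj_mul_fderiv_comp_torusExp hsm hmaps hθ₀
  by_cases ha : a = 0
  · refine ⟨b, fun hb => hu ?_, fderiv_comp_torusExp_eq_zero_of_im hsm hmaps hθ₀ fun i => ?_⟩
    · rw [← hu_eq, ha, hb]
      ext
      simp
    · have h := congr_arg Complex.re (hsum i)
      rw [Complex.add_re, Complex.I_mul_re, hre a i, zero_add, Complex.zero_re] at h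
      exact neg_eq_zero.1 h
  · refine ⟨a, ha, fderiv_comp_torusExp_eq_zero_of_im hsm hmaps hθ₀ fun i => ?_⟩
    have h := congr_arg Complex.im (hsum i)
    rwa [Complex.add_im, Complex.I_mul_im, hre b i, add_zero, Complex.zero_im] at h

end BoundaryDerivative

section SzegoKernel

lemma lintegral_enorm_sq_one_sub_mul_inv {b : ℂ} (hb : ‖b‖ < 1) :
    ∫⁻ t in Icc (0 : ℝ) 1, ‖(1 - b * 𝐞 t)⁻¹‖ₑ ^ 2 = ENNReal.ofReal ((1 - ‖b‖ ^ 2)⁻¹) := by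
  have hpos : 0 < 1 - ‖b‖ ^ 2 := by nlinarith [norm_nonneg b]
  have hkernel : ∀ t : ℝ, ‖(1 - b * 𝐞 t)⁻¹‖ₑ ^ 2 =
      ENNReal.ofReal ((1 - ‖b‖ ^ 2)⁻¹) * ENNReal.ofReal (poissonKernel 0 (b * 𝐞 t) 1) := fun t => by
    have hnorm : ‖b * (𝐞 t : ℂ)‖ = ‖b‖ := by rw [norm_mul, Circle.norm_coe, mul_one]
    rw [← ENNReal.ofReal_mul (by positivity), poissonKernel_def, sub_zero, sub_zero, hnorm,
      ← ofReal_norm, ← ENNReal.ofReal_pow (norm_nonneg _), norm_inv, norm_one]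
    congr 1
    field_simp
  have hdiff : DiffContOnCl ℂ (fun z => b * z) (ball 0 1) :=
    (differentiable_id.const_mul b).diffContOnCl
  have hlt : ∀ z : ℂ, ‖z‖ ≤ 1 → ‖b * z‖ < 1 := fun z hz => by
    rw [norm_mul]
    exact (mul_le_of_le_one_right (norm_nonneg b) hz).trans_lt hb
  simp only [hkernel]
  rw [lintegral_const_mul' _ _ ENNReal.ofReal_ne_top,
    lintegral_poissonKernel_comp hdiff hlt norm_one]
  simp [poissonKernel_def]

variable {n : ℕ}

lemma one_sub_conj_mul_ne_zero {a w : ℂ} (ha : ‖a‖ ≤ 1) (hw : ‖w‖ < 1) :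
    1 - conj a * w ≠ 0 := fun h => by
  have hlt : ‖conj a * w‖ < 1 := by
    rw [norm_mul, RCLike.norm_conj]
    exact mul_lt_one_of_nonneg_of_lt_one_right ha (norm_nonneg _) hw
  rw [← sub_eq_zero.1 h, norm_one] at hlt
  exact lt_irrefl _ hlt

/-- The Szegő kernel of the polydisc, with pole `a` in the first argument. -/
def polySzego (a w : Fin n → ℂ) : ℂ := ∏ j, (1 - conj (a j) * w j)⁻¹

lemma differentiableOn_polySzego {a : Fin n → ℂ} (ha : a ∈ closedPolydisc n) :
    DifferentiableOn ℂ (polySzego a) (polydisc n) := by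
  have hfactor : ∀ j, DifferentiableOn ℂ (fun w => (1 - conj (a j) * w j)⁻¹) (polydisc n) :=
    fun j => DifferentiableOn.fun_inv (by fun_prop) fun w hw =>
      one_sub_conj_mul_ne_zero (ha j) (hw j)
  exact fun w hw => (HasFDerivWithinAt.finsetProd fun j _ =>
    (hfactor j w hw).hasFDerivWithinAt).differentiableWithinAt

lemma hardySq_polySzego_le {a : Fin n → ℂ} (ha : a ∈ polydisc n) :
    hardySq n (polySzego a) ≤ ∏ j, ENNReal.ofReal ((1 - ‖a j‖ ^ 2)⁻¹) := by
  rw [hardySq_eq]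
  refine iSup₂_le fun r hr => ?_
  have hnorm : ∀ j, ‖conj (a j) * r‖ ≤ ‖a j‖ := fun j => by
    rw [norm_mul, RCLike.norm_conj, Complex.norm_of_nonneg hr.1.le]
    exact mul_le_of_le_one_right (norm_nonneg _) hr.2.le
  calc ∫⁻ θ in unitCube n, ‖polySzego a ((r : ℂ) • torusExp θ)‖ₑ ^ 2
      = ∫⁻ θ in unitCube n, ∏ j, ‖(1 - conj (a j) * r * 𝐞 (θ j))⁻¹‖ₑ ^ 2 := by
        refine lintegral_congr fun θ => ?_
        simp only [polySzego, torusExp, enorm_eq_nnnorm, nnnorm_prod, Pi.smul_apply, smul_eq_mul,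
          mul_assoc, ENNReal.ofNNReal_finsetProd, Finset.prod_pow]
    _ = ∏ j, ∫⁻ t in Icc (0 : ℝ) 1, ‖(1 - conj (a j) * r * 𝐞 t)⁻¹‖ₑ ^ 2 := by
        refine lintegral_univ_pi_prod _
          (g := fun j t => ‖(1 - conj (a j) * r * 𝐞 t)⁻¹‖ₑ ^ 2) fun j => ?_
        exact (measurable_const.sub
          (measurable_coe_fourierChar.const_mul _)).inv.enorm.pow_const 2
    _ ≤ ∏ j, ENNReal.ofReal ((1 - ‖a j‖ ^ 2)⁻¹) := by
        refine Finset.prod_le_prod' fun j _ => ?_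
        rw [lintegral_enorm_sq_one_sub_mul_inv ((hnorm j).trans_lt (ha j))]
        have := ha j
        gcongr
        · nlinarith [norm_nonneg (a j)]
        · exact hnorm j

lemma norm_one_sub_conj_mul_le {η w : ℂ} (hη : ‖η‖ = 1) (hw : ‖w‖ ≤ 1) {t : ℝ} (ht : 0 ≤ t)
    (hdist : ‖w - η‖ ≤ t) : ‖1 - conj (((1 - t : ℝ) : ℂ) * η) * w‖ ≤ 2 * t := by
  have hsplit : 1 - conj (((1 - t : ℝ) : ℂ) * η) * w = conj η * (η - w) + t * (conj η * w) := by
    have hηη : conj η * η = 1 := by rw [Complex.conj_mul', hη]; norm_num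
    rw [map_mul, Complex.conj_ofReal]
    push_cast
    linear_combination -hηη
  calc ‖1 - conj (((1 - t : ℝ) : ℂ) * η) * w‖ ≤ ‖η - w‖ + t * ‖w‖ := by
        rw [hsplit]
        refine (norm_add_le _ _).trans_eq ?_
        rw [norm_mul, norm_mul, norm_mul, RCLike.norm_conj, hη, one_mul, one_mul,
          Complex.norm_of_nonneg ht]
    _ ≤ t + t * 1 := by gcongr; rwa [norm_sub_rev]
    _ = 2 * t := by ring

variable {η : Fin n → ℂ} {t : ℝ}

lemma inv_pow_le_norm_polySzego (hη : η ∈ torus n) (ht : t ∈ Ioo (0 : ℝ) 1) {w : Fin n → ℂ}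
    (hw : w ∈ polydisc n) (hdist : ∀ i, ‖w i - η i‖ ≤ t) :
    ((2 * t)⁻¹) ^ n ≤ ‖polySzego (((1 - t : ℝ) : ℂ) • η) w‖ := by
  have ha := ofReal_smul_mem_polydisc (torus_subset_closedPolydisc n hη) (sub_nonneg.2 ht.2.le)
    (sub_lt_self 1 ht.1)
  have h2t : 0 ≤ (2 * t)⁻¹ := inv_nonneg.2 (by linarith [ht.1])
  calc ((2 * t)⁻¹) ^ n = ∏ _j : Fin n, (2 * t)⁻¹ := by simp
    _ ≤ ∏ j, ‖(1 - conj ((((1 - t : ℝ) : ℂ) • η) j) * w j)⁻¹‖ := by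
        refine Finset.prod_le_prod (fun _ _ => h2t) fun j _ => ?_
        rw [norm_inv]
        exact inv_anti₀ (norm_pos_iff.2 (one_sub_conj_mul_ne_zero (ha j).le (hw j)))
          (norm_one_sub_conj_mul_le (hη j) (hw j).le ht.1.le (hdist j))
    _ = ‖polySzego (((1 - t : ℝ) : ℂ) • η) w‖ := (norm_prod _ _).symm

lemma hardySq_polySzego_smul_le (hη : η ∈ torus n) (ht : t ∈ Ioo (0 : ℝ) 1) :
    hardySq n (polySzego (((1 - t : ℝ) : ℂ) • η)) ≤ ENNReal.ofReal ((t⁻¹) ^ n) := by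
  have ha := ofReal_smul_mem_polydisc (torus_subset_closedPolydisc n hη) (sub_nonneg.2 ht.2.le)
    (sub_lt_self 1 ht.1)
  have hnorm : ∀ j, ‖(((1 - t : ℝ) : ℂ) • η) j‖ = 1 - t := fun j => by
    rw [Pi.smul_apply, norm_smul, hη j, mul_one, Complex.norm_of_nonneg (sub_nonneg.2 ht.2.le)]
  calc hardySq n (polySzego (((1 - t : ℝ) : ℂ) • η))
      ≤ ∏ j, ENNReal.ofReal ((1 - ‖(((1 - t : ℝ) : ℂ) • η) j‖ ^ 2)⁻¹) := hardySq_polySzego_le ha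
    _ ≤ ∏ _j : Fin n, ENNReal.ofReal t⁻¹ := by
        refine Finset.prod_le_prod' fun j _ => ENNReal.ofReal_le_ofReal (inv_anti₀ ht.1 ?_)
        rw [hnorm]
        nlinarith [ht.1, ht.2]
    _ = ENNReal.ofReal ((t⁻¹) ^ n) := by
        rw [ENNReal.ofReal_pow (inv_nonneg.2 ht.1.le)]
        simp

end SzegoKernel

section CarlesonCondition

variable {n : ℕ} {φ : (Fin n → ℂ) → (Fin n → ℂ)}

lemma setLIntegral_dilate_le_hardySq (g : (Fin n → ℂ) → ℂ) {r : ℝ} (hr : r ∈ Ioo (0 : ℝ) 1)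
    {θ₀ : Fin n → ℝ} {s : Set (Fin n → ℝ)} (hs : s ⊆ closedBall θ₀ (1 / 2)) :
    ∫⁻ θ in s, ‖g ((r : ℂ) • torusExp θ)‖ₑ ^ 2 ≤ hardySq n g := by
  have hcube : s ⊆ (fun i => θ₀ i - 1 / 2) +ᵥ unitCube n := fun θ hθ => by
    rw [mem_vadd_set_iff_neg_vadd_mem]
    intro i _
    have hi := abs_le.1 ((dist_le_pi_dist θ θ₀ i).trans (hs hθ))
    simp only [vadd_eq_add, Pi.add_apply, Pi.neg_apply, mem_Icc]
    constructor <;> linarith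
  calc ∫⁻ θ in s, ‖g ((r : ℂ) • torusExp θ)‖ₑ ^ 2
      ≤ ∫⁻ θ in (fun i => θ₀ i - 1 / 2) +ᵥ unitCube n, ‖g ((r : ℂ) • torusExp θ)‖ₑ ^ 2 :=
        lintegral_mono_set hcube
    _ = ∫⁻ θ in unitCube n, ‖g ((r : ℂ) • torusExp θ)‖ₑ ^ 2 := by
        rw [setLIntegral_vadd, lintegral_torusExp_add fun z => ‖g ((r : ℂ) • z)‖ₑ ^ 2]
    _ ≤ hardySq n g := by
        rw [hardySq_eq]
        exact le_iSup₂_of_le r hr le_rfl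

lemma ofReal_mul_volume_le_hardySq_comp (hφ : DifferentiableOn ℂ φ (polydisc n))
    (hmap : MapsTo φ (polydisc n) (polydisc n)) {r t : ℝ} (hr : r ∈ Ioo (0 : ℝ) 1)
    (ht : t ∈ Ioo (0 : ℝ) 1) {η : Fin n → ℂ} (hη : η ∈ torus n) {θ₀ : Fin n → ℝ}
    {s : Set (Fin n → ℝ)} (hs : s ⊆ closedBall θ₀ (1 / 2))
    (hclose : ∀ θ ∈ s, ∀ i, ‖φ ((r : ℂ) • torusExp θ) i - η i‖ ≤ t) :
    ENNReal.ofReal (((2 * t)⁻¹ ^ n) ^ 2) * volume s ≤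
      hardySq n fun z => polySzego (((1 - t : ℝ) : ℂ) • η) (φ z) := by
  have hkernel := fun w => inv_pow_le_norm_polySzego hη ht (w := w)
  have hS := differentiableOn_polySzego (polydisc_subset_closedPolydisc n (ofReal_smul_mem_polydisc
    (torus_subset_closedPolydisc n hη) (sub_nonneg.2 ht.2.le) (sub_lt_self 1 ht.1)))
  generalize polySzego (((1 - t : ℝ) : ℂ) • η) = S at hkernel hS ⊢
  have hmem : ∀ θ : Fin n → ℝ, (r : ℂ) • torusExp θ ∈ polydisc n := fun θ =>
    ofReal_smul_mem_polydisc (torusExp_mem_closedPolydisc θ) hr.1.le hr.2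
  have hcont : Continuous fun θ : Fin n → ℝ => S (φ ((r : ℂ) • torusExp θ)) :=
    (hS.comp hφ hmap).continuousOn.comp_continuous
      ((continuous_const_smul (r : ℂ)).comp continuous_torusExp) hmem
  have h2t : 0 ≤ (2 * t)⁻¹ ^ n := pow_nonneg (inv_nonneg.2 (by linarith [ht.1])) n
  calc ENNReal.ofReal (((2 * t)⁻¹ ^ n) ^ 2) * volume s
      = ∫⁻ _ in s, ENNReal.ofReal (((2 * t)⁻¹ ^ n) ^ 2) := (setLIntegral_const _ _).symm
    _ ≤ ∫⁻ θ in s, ‖S (φ ((r : ℂ) • torusExp θ))‖ₑ ^ 2 := by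
        refine setLIntegral_mono (hcont.measurable.enorm.pow_const 2) fun θ hθ => ?_
        rw [ENNReal.ofReal_pow h2t, ← ofReal_norm]
        gcongr
        exact hkernel _ (hmap (hmem θ)) (hclose θ hθ)
    _ ≤ hardySq n fun z => S (φ z) := setLIntegral_dilate_le_hardySq _ hr hs

/-- A Carleson condition: Szegő kernels test boundedness against boxes of side `t` at `η`. -/
lemma exists_volume_le_of_bddHardy (hφ : DifferentiableOn ℂ φ (polydisc n))
    (hmap : MapsTo φ (polydisc n) (polydisc n)) (hb : bddHardy n φ) :
    ∃ C : ℝ, ∀ r ∈ Ioo (0 : ℝ) 1, ∀ t ∈ Ioo (0 : ℝ) 1, ∀ η ∈ torus n, ∀ θ₀,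
      ∀ s ⊆ closedBall θ₀ (1 / 2), (∀ θ ∈ s, ∀ i, ‖φ ((r : ℂ) • torusExp θ) i - η i‖ ≤ t) →
        volume s ≤ ENNReal.ofReal (C * t ^ n) := by
  obtain ⟨C, hC, hbound⟩ := hb
  refine ⟨C * 4 ^ n, fun r hr t ht η hη θ₀ s hs hclose => ?_⟩
  have ht0 := ht.1
  have hS := differentiableOn_polySzego (polydisc_subset_closedPolydisc n (ofReal_smul_mem_polydisc
    (torus_subset_closedPolydisc n hη) (sub_nonneg.2 ht.2.le) (sub_lt_self 1 ht.1)))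
  have htest : ENNReal.ofReal (((2 * t)⁻¹ ^ n) ^ 2) * volume s ≤
      ENNReal.ofReal (C * t⁻¹ ^ n) := by
    rw [ENNReal.ofReal_mul hC.le]
    refine (ofReal_mul_volume_le_hardySq_comp hφ hmap hr ht hη hs hclose).trans
      ((hbound _ hS).trans ?_)
    gcongr _ * ?_
    exact hardySq_polySzego_smul_le hη ht
  have hpos : 0 < ((2 * t)⁻¹ ^ n) ^ 2 := by positivity
  calc volume s ≤ ENNReal.ofReal (C * t⁻¹ ^ n) / ENNReal.ofReal (((2 * t)⁻¹ ^ n) ^ 2) := by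
        rwa [ENNReal.le_div_iff_mul_le (.inl (ENNReal.ofReal_pos.2 hpos).ne')
          (.inl ENNReal.ofReal_ne_top), mul_comm]
    _ = ENNReal.ofReal (C * 4 ^ n * t ^ n) := by
        rw [← ENNReal.ofReal_div_of_pos hpos, show (4 : ℝ) = 2 ^ 2 by norm_num]
        congr 1
        simp only [inv_pow, mul_pow, div_inv_eq_mul]
        field_simp
        exact pow_right_comm _ _ _

end CarlesonCondition

section Tube

variable {E F : Type*} [NormedAddCommGroup E] [NormedSpace ℝ E] [NormedAddCommGroup F]
  [NormedSpace ℝ F] {x₀ v : E} {ε : ℝ}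

/-- The tube of length `ε` in the direction `v` and width `ε ^ 2` around `x₀`. A `C²` function whose
derivative at `x₀` vanishes on `v` oscillates by `O(ε ^ 2)` on it. -/
def tube (x₀ v : E) (ε : ℝ) : Set E := {x | ∃ s : ℝ, |s| ≤ ε ∧ ‖x - x₀ - s • v‖ ≤ ε ^ 2}

lemma tube_subset_closedBall (h0 : 0 ≤ ε) (h1 : ε ≤ 1) :
    tube x₀ v ε ⊆ closedBall x₀ (ε * (‖v‖ + 1)) := by
  rintro x ⟨s, hs, hx⟩
  rw [mem_closedBall_iff_norm]
  calc ‖x - x₀‖ ≤ ‖s • v‖ + ‖x - x₀ - s • v‖ := norm_le_norm_add_norm_sub' _ _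
    _ ≤ ε * ‖v‖ + ε ^ 2 := by
        rw [norm_smul, Real.norm_eq_abs]
        gcongr
    _ ≤ ε * (‖v‖ + 1) := by nlinarith

lemma eventually_tube_subset {u : Set E} (hu : u ∈ 𝓝 x₀) (v : E) :
    ∀ᶠ ε in 𝓝[>] (0 : ℝ), tube x₀ v ε ⊆ u := by
  obtain ⟨δ, hδ, hball⟩ := nhds_basis_closedBall.mem_iff.1 hu
  have hlim : Tendsto (fun ε : ℝ => ε * (‖v‖ + 1)) (𝓝[>] 0) (𝓝 0) := by
    have : Continuous fun ε : ℝ => ε * (‖v‖ + 1) := by fun_prop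
    simpa using (this.tendsto 0).mono_left nhdsWithin_le_nhds
  filter_upwards [hlim.eventually_le_const hδ, Ioo_mem_nhdsGT one_pos] with ε hle hε
  exact (tube_subset_closedBall hε.1.le hε.2.le).trans
    ((closedBall_subset_closedBall hle).trans hball)

lemma exists_eventually_norm_sub_le_of_mem_tube {f : E → F} (hf : ContDiffAt ℝ 2 f x₀)
    (hv : fderiv ℝ f x₀ v = 0) :
    ∃ K : ℝ, ∀ᶠ ε in 𝓝[>] (0 : ℝ), ∀ x ∈ tube x₀ v ε, ‖f x - f x₀‖ ≤ K * ε ^ 2 := by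
  obtain ⟨K, hK, htaylor⟩ := exists_eventually_norm_sub_fderiv_le hf
  refine ⟨K * (‖v‖ + 1) ^ 2 + ‖fderiv ℝ f x₀‖, ?_⟩
  have hx₀ : ∀ᶠ x in 𝓝 x₀, ‖f x - f x₀ - fderiv ℝ f x₀ (x - x₀)‖ ≤ K * dist x₀ x ^ 2 :=
    (Continuous.prodMk_right x₀).continuousAt.eventually htaylor
  filter_upwards [eventually_tube_subset hx₀ v, Ioo_mem_nhdsGT one_pos] with ε hsub hε x hx
  have hdist : dist x₀ x ≤ ε * (‖v‖ + 1) := by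
    rw [dist_comm]
    exact tube_subset_closedBall hε.1.le hε.2.le hx
  have htaylor_x := hsub hx
  obtain ⟨s, -, hs⟩ := hx
  have hderiv : ‖fderiv ℝ f x₀ (x - x₀)‖ ≤ ‖fderiv ℝ f x₀‖ * ε ^ 2 := by
    rw [← sub_add_cancel (x - x₀) (s • v), map_add, map_smul, hv, smul_zero, add_zero]
    exact (fderiv ℝ f x₀).le_of_opNorm_le_of_le le_rfl hs
  calc ‖f x - f x₀‖
      ≤ ‖fderiv ℝ f x₀ (x - x₀)‖ + ‖f x - f x₀ - fderiv ℝ f x₀ (x - x₀)‖ :=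
        norm_le_norm_add_norm_sub' _ _
    _ ≤ ‖fderiv ℝ f x₀‖ * ε ^ 2 + K * (ε * (‖v‖ + 1)) ^ 2 :=
        add_le_add hderiv (htaylor_x.trans (by gcongr))
    _ = (K * (‖v‖ + 1) ^ 2 + ‖fderiv ℝ f x₀‖) * ε ^ 2 := by ring

variable {n : ℕ}

lemma volume_univ_pi_Icc_update (k : Fin n) {a b : ℝ} (ha : 0 ≤ a) (hb : 0 ≤ b) :
    volume (univ.pi fun j =>
        Icc (-Function.update (fun _ => b) k a j) (Function.update (fun _ => b) k a j)) =
      ENNReal.ofReal (2 * a * (2 * b) ^ (n - 1)) := by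
  have hside : ∀ j, volume (Icc (-Function.update (fun _ => b) k a j)
      (Function.update (fun _ => b) k a j)) =
        Function.update (fun _ => ENNReal.ofReal (2 * b)) k (ENNReal.ofReal (2 * a)) j :=
      fun j => by
    rcases eq_or_ne j k with rfl | hj
    · simp [two_mul]
    · simp [hj, two_mul]
  rw [volume_pi_pi, Finset.prod_congr rfl fun j _ => hside j,
    Finset.prod_update_of_mem (Finset.mem_univ k), Finset.prod_const,
    ENNReal.ofReal_mul (mul_nonneg zero_le_two ha),
    ENNReal.ofReal_pow (mul_nonneg zero_le_two hb)]
  simp [Finset.card_sdiff]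

/-- The transvection sending `e k` to `v` and fixing the other basis vectors carries a box onto a
subset of the tube. -/
lemma exists_mul_pow_le_volume_tube {v : Fin n → ℝ} (hv : v ≠ 0) (x₀ : Fin n → ℝ) :
    ∃ c > (0 : ℝ), ∀ ε > 0,
      ENNReal.ofReal (c * ε ^ (2 * n)) ≤ ENNReal.ofReal ε * volume (tube x₀ v ε) := by
  obtain ⟨k, hk⟩ := Function.ne_iff.1 hv
  refine ⟨|v k| * 2 ^ n, mul_pos (abs_pos.2 hk) (by positivity), fun ε hε => ?_⟩
  set w : Fin n → ℝ := Function.update (fun _ => ε ^ 2) k ε with hw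
  set T := LinearMap.transvection (LinearMap.proj k : (Fin n → ℝ) →ₗ[ℝ] ℝ) (v - Pi.single k 1)
  have hdet : LinearMap.det T = v k := by
    rw [LinearMap.transvection.det]
    simp
  have himage : T '' (univ.pi fun j => Icc (-w j) (w j)) ⊆ (x₀ + ·) ⁻¹' tube x₀ v ε := by
    rintro _ ⟨y, hy, rfl⟩
    have hy' : ∀ j, |y j| ≤ w j := fun j => abs_le.2 (hy j trivial)
    refine ⟨y k, by simpa [w] using hy' k, ?_⟩
    refine (pi_norm_le_iff_of_nonneg (sq_nonneg ε)).2 fun j => ?_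
    rcases eq_or_ne j k with rfl | hj
    · have hTy : T y j - y j * v j = 0 := by
        simp [T, LinearMap.transvection.apply, mul_sub]
      simpa [hTy] using sq_nonneg ε
    · simpa [T, LinearMap.transvection.apply, mul_sub, hj, w] using hy' j
  have hvol : ENNReal.ofReal (|v k| * (2 * ε * (2 * ε ^ 2) ^ (n - 1))) ≤ volume (tube x₀ v ε) := by
    rw [ENNReal.ofReal_mul (abs_nonneg _), ← volume_univ_pi_Icc_update k hε.le (sq_nonneg ε), ← hw,
      ← hdet, ← Measure.addHaar_image_linearMap, ← measure_preimage_add volume x₀ (tube x₀ v ε)]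
    exact measure_mono himage
  calc ENNReal.ofReal (|v k| * 2 ^ n * ε ^ (2 * n))
      = ENNReal.ofReal ε * ENNReal.ofReal (|v k| * (2 * ε * (2 * ε ^ 2) ^ (n - 1))) := by
        rw [← ENNReal.ofReal_mul hε.le, pow_mul, mul_assoc, ← mul_pow,
          ← mul_pow_sub_one (Fin.pos k).ne']
        congr 1
        ring
    _ ≤ ENNReal.ofReal ε * volume (tube x₀ v ε) := by gcongr

end Tube

section Necessity

variable {n : ℕ} {φ : (Fin n → ℂ) → (Fin n → ℂ)}

lemma exists_norm_dilate_sub_le (hsm : ContDiffOn ℝ 1 φ (closedPolydisc n)) :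
    ∃ L ≥ (0 : ℝ), ∀ r ∈ Ioo (0 : ℝ) 1, ∀ θ, ‖φ ((r : ℂ) • torusExp θ) - φ (torusExp θ)‖ ≤
      L * (1 - r) := by
  have hconvex : Convex ℝ (closedPolydisc n) :=
    closedPolydisc_eq_closedBall n ▸ convex_closedBall _ _
  obtain ⟨L, hL⟩ := hsm.exists_lipschitzOnWith one_ne_zero hconvex (isCompact_closedPolydisc n)
  refine ⟨L, L.coe_nonneg, fun r hr θ => ?_⟩
  have hθ := torusExp_mem_closedPolydisc θ
  have hnorm : ‖torusExp θ‖ ≤ 1 := (pi_norm_le_iff_of_nonneg zero_le_one).2 hθ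
  have hrθ := polydisc_subset_closedPolydisc n (ofReal_smul_mem_polydisc hθ hr.1.le hr.2)
  refine (hL.norm_sub_le hrθ hθ).trans (mul_le_mul_of_nonneg_left ?_ L.coe_nonneg)
  have hsplit : torusExp θ - (r : ℂ) • torusExp θ = ((1 - r : ℝ) : ℂ) • torusExp θ := by
    push_cast
    rw [sub_smul, one_smul]
  rw [norm_sub_rev, hsplit, norm_smul, Complex.norm_of_nonneg (sub_nonneg.2 hr.2.le)]
  exact mul_le_of_le_one_right (sub_nonneg.2 hr.2.le) hnorm

lemma exists_eventually_volume_tube_le (hhol : DifferentiableOn ℂ φ (polydisc n))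
    (hsm : ContDiffOn ℝ 2 φ (closedPolydisc n)) (hmap : MapsTo φ (polydisc n) (polydisc n))
    (hb : bddHardy n φ) {θ₀ v : Fin n → ℝ} (hθ₀ : φ (torusExp θ₀) ∈ torus n)
    (hv : fderiv ℝ (fun θ => φ (torusExp θ)) θ₀ v = 0) :
    ∃ C : ℝ, ∀ᶠ ε in 𝓝[>] (0 : ℝ),
      volume (tube θ₀ v ε) ≤ ENNReal.ofReal (C * ε ^ (2 * n)) := by
  obtain ⟨C, hC⟩ := exists_volume_le_of_bddHardy hhol hmap hb
  obtain ⟨L, hL0, hL⟩ := exists_norm_dilate_sub_le (hsm.of_le one_le_two)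
  obtain ⟨K, hK⟩ := exists_eventually_norm_sub_le_of_mem_tube
    (hsm.comp_contDiff contDiff_torusExp torusExp_mem_closedPolydisc).contDiffAt hv
  set B := L + |K| + 1
  have hB : 0 < B := by positivity
  have hsmall : ∀ᶠ ε in 𝓝[>] (0 : ℝ), B * ε ^ 2 < 1 := by
    have hcont : Continuous fun ε : ℝ => B * ε ^ 2 := by fun_prop
    exact nhdsWithin_le_nhds (hcont.continuousAt.eventually_lt_const (by simp))
  refine ⟨C * B ^ n, ?_⟩
  filter_upwards [hK, hsmall, Ioo_mem_nhdsGT one_pos,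
    eventually_tube_subset (closedBall_mem_nhds θ₀ one_half_pos) v] with ε hKε hBε hε hsub
  have hε2 : 0 < ε ^ 2 := pow_pos hε.1 2
  have hr : 1 - ε ^ 2 ∈ Ioo (0 : ℝ) 1 :=
    ⟨sub_pos.2 (pow_lt_one₀ hε.1.le hε.2 two_ne_zero), sub_lt_self _ hε2⟩
  have hvol := hC (1 - ε ^ 2) hr (B * ε ^ 2) ⟨mul_pos hB hε2, hBε⟩ _ hθ₀ θ₀ _ hsub fun θ hθ i => ?_
  · rwa [mul_pow, ← pow_mul, ← mul_assoc] at hvol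
  calc ‖φ (((1 - ε ^ 2 : ℝ) : ℂ) • torusExp θ) i - φ (torusExp θ₀) i‖
      ≤ ‖φ (((1 - ε ^ 2 : ℝ) : ℂ) • torusExp θ) - φ (torusExp θ₀)‖ :=
        norm_le_pi_norm (φ (((1 - ε ^ 2 : ℝ) : ℂ) • torusExp θ) - φ (torusExp θ₀)) i
    _ ≤ ‖φ (((1 - ε ^ 2 : ℝ) : ℂ) • torusExp θ) - φ (torusExp θ)‖ +
          ‖φ (torusExp θ) - φ (torusExp θ₀)‖ := norm_sub_le_norm_sub_add_norm_sub _ _ _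
    _ ≤ L * (1 - (1 - ε ^ 2)) + K * ε ^ 2 := add_le_add (hL _ hr θ) (hKε θ hθ)
    _ ≤ B * ε ^ 2 := by nlinarith [le_abs_self K]

theorem det_jacobian_ne_zero_of_bddHardy (hhol : DifferentiableOn ℂ φ (polydisc n))
    (hsm : ContDiffOn ℝ 2 φ (closedPolydisc n)) (hmap : MapsTo φ (polydisc n) (polydisc n))
    (hb : bddHardy n φ) {ζ : Fin n → ℂ} (hζ : ζ ∈ torus n) (hφζ : φ ζ ∈ torus n) :
    (jacobian φ ζ).det ≠ 0 := fun hdet => by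
  obtain ⟨θ₀, rfl⟩ := exists_torusExp_eq hζ
  obtain ⟨v, hv0, hv⟩ := exists_ne_zero_fderiv_comp_torusExp_eq_zero hhol (hsm.of_le one_le_two)
    (mapsTo_closedPolydisc hsm.continuousOn hmap) hφζ hdet
  obtain ⟨C, hC⟩ := exists_eventually_volume_tube_le hhol hsm hmap hb hφζ hv
  obtain ⟨c, hc, hlower⟩ := exists_mul_pow_le_volume_tube hv0 θ₀
  have hle : ∀ᶠ ε in 𝓝[>] (0 : ℝ), c ≤ ε * C := by
    filter_upwards [hC, self_mem_nhdsWithin] with ε hupper (hε : 0 < ε)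
    have hchain := (hlower ε hε).trans (mul_le_mul_right hupper (ENNReal.ofReal ε))
    rw [← ENNReal.ofReal_mul hε.le, ← mul_assoc] at hchain
    by_contra! hlt
    refine hchain.not_gt ((ENNReal.ofReal_lt_ofReal_iff (by positivity)).2 ?_)
    gcongr
  have hlim : Tendsto (fun ε : ℝ => ε * C) (𝓝[>] 0) (𝓝 0) := by
    simpa using ((continuous_mul_const C).tendsto 0).mono_left nhdsWithin_le_nhds
  exact hc.not_ge (ge_of_tendsto hlim hle)

end Necessity

lemma exists_forall_ne_norm_lt_one {w : Fin 2 → ℂ} (hle : w ∈ closedPolydisc 2)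
    (hw : w ∉ torus 2) : ∃ k, ∀ i ≠ k, ‖w i‖ < 1 := by
  obtain ⟨i, hi⟩ := not_forall.1 hw
  refine ⟨i.rev, fun j hj => ?_⟩
  obtain rfl : j = i := by fin_cases i <;> fin_cases j <;> simp_all
  exact lt_of_le_of_ne (hle j) hi

theorem bidisc_hardy_criterion_general {n : ℕ} (φ : (Fin n → ℂ) → (Fin n → ℂ))
    (hhol : DifferentiableOn ℂ φ (polydisc n))
    (hsm : ContDiffOn ℝ 2 φ (closedPolydisc n))
    (hmap : ∀ z ∈ polydisc n, φ z ∈ polydisc n)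
    (hdeg : ∀ ζ ∈ torus n, φ ζ ∉ torus n → ∃ k, ∀ i ≠ k, ‖φ ζ i‖ < 1) :
    bddHardy n φ ↔
      ∀ ζ ∈ torus n, φ ζ ∈ torus n →
        Matrix.det (Matrix.of fun i j => jacEntry n φ ζ i j) ≠ 0 := by
  have hdiff : DiffContOnCl ℂ φ (polydisc n) := ⟨hhol, closure_polydisc n ▸ hsm.continuousOn⟩
  have hmaps := mapsTo_closedPolydisc hsm.continuousOn hmap
  refine ⟨fun hb ζ hζ hφζ => det_jacobian_ne_zero_of_bddHardy hhol hsm hmap hb hζ hφζ,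
    fun hdet => ?_⟩
  exact bddHardy_of_forall_torusExp hdiff hmap
    (hsm.comp_contDiff contDiff_torusExp torusExp_mem_closedPolydisc)
    (fun θ hθ => det_fderiv_im_ne_zero hhol (hsm.of_le one_le_two) hmaps hθ
      (hdet _ (torusExp_mem_torus θ) hθ))
    fun θ => hdeg _ (torusExp_mem_torus θ)

theorem bidisc_hardy_criterion (φ : (Fin 2 → ℂ) → (Fin 2 → ℂ))
    (hhol : DifferentiableOn ℂ φ (polydisc 2))
    (hsm : ContDiffOn ℝ 2 φ (closedPolydisc 2))
    (hmap : ∀ z ∈ polydisc 2, φ z ∈ polydisc 2) :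
    bddHardy 2 φ ↔
      ∀ ζ ∈ torus 2, φ ζ ∈ torus 2 →
        Matrix.det (Matrix.of fun i j => jacEntry 2 φ ζ i j) ≠ 0 :=
  bidisc_hardy_criterion_general φ hhol hsm hmap fun _ hζ =>
    exists_forall_ne_norm_lt_one (mapsTo_closedPolydisc hsm.continuousOn hmap
      (torus_subset_closedPolydisc 2 hζ))

end
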